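/- arXiv:2311.06611 — 2 statements merged into one kernel-verified Lean document; each statement's English description precedes it below -/
import Mathlib

section
/- Let G=(V,E,I,{s,t}) be a grapht with terminal set {s,t}. Suppose 𝒫 is a linkage of s with |δ_G(t)∖E(𝒫)|=1, and there is no linkage 𝒫' of s with δ_{𝒫'}(t) ⊊ δ_{𝒫}(t) (where δ_{𝒬}(t) denotes the set of edges of δ_G(t) used by the paths of 𝒬). Then |δ_G(t)∖E(𝒬)| ≤ 1 holds for every linkage 𝒬 of s. -/
/-! Common definitions: graphts (multigraphs with terminals), walks, paths, cycles,
edge cuts, inner Eulerian graphts, path systems, linkages, Erdős–Menger cuts,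
restriction (edge deletion) and contraction. -/

universe u v

/-- A *grapht*: a multigraph (no loops, parallel edges allowed) given by an incidence
function `I : E → Sym2 V`, together with a set `T` of at least two terminal vertices. -/
structure Grapht (V : Type u) (E : Type v) where
  I : E → Sym2 V
  loopless : ∀ e : E, ¬ (I e).IsDiag
  T : Set V
  T_nontrivial : T.Nontrivial

namespace Grapht

variable {V : Type u} {E : Type v}

/-- `G.IsWalk vs es` holds when `vs` is the vertex sequence and `es` the edge sequence
of a walk in `G`. -/
inductive IsWalk (G : Grapht V E) : List V → List E → Prop
  | nil (v : V) : IsWalk G [v] []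
  | cons {u w : V} {vs : List V} {e : E} {es : List E} :
      G.I e = s(u, w) → IsWalk G (w :: vs) es → IsWalk G (u :: w :: vs) (e :: es)

/-- A finite path in the grapht `G` (no repeated vertices), with endpoints `first`, `last`. -/
structure Path (G : Grapht V E) where
  first : V
  last : V
  verts : List V
  edges : List E
  isWalk : G.IsWalk verts edges
  nodup : verts.Nodup
  head_eq : verts.head? = some first
  getLast_eq : verts.getLast? = some last

/-- A finite cycle in the grapht `G`. -/
structure Cycle (G : Grapht V E) where
  verts : List V
  edges : List E
  isWalk : G.IsWalk verts edges
  closed : verts.head? = verts.getLast?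
  nontrivial : edges ≠ []
  edges_nodup : edges.Nodup
  tail_nodup : verts.tail.Nodup

variable {G : Grapht V E}

/-- The internal (inner) vertices of a path. -/
def Path.inner (P : G.Path) : List V := (P.verts.drop 1).dropLast

/-- The edge set of a path. -/
def Path.edgeSet (P : G.Path) : Set E := {e | e ∈ P.edges}

/-- The edge set of a cycle. -/
def Cycle.edgeSet (C : G.Cycle) : Set E := {e | e ∈ C.edges}

variable (G)

/-- `δ_G(X)`: the set of edges with exactly one endpoint in `X`. -/
def edgeCut (X : Set V) : Set E :=
  {e | ∃ u w, G.I e = s(u, w) ∧ u ∈ X ∧ w ∉ X}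

/-- A grapht is *inner Eulerian* if there is no `X ⊆ V ∖ T` whose cut `δ(X)` is a
finite set of odd size. -/
def InnerEulerian : Prop :=
  ∀ X : Set V, Disjoint X G.T → ¬ ((G.edgeCut X).Finite ∧ Odd (G.edgeCut X).ncard)

/-- An `AB`-path: a path with first vertex in `A`, last vertex in `B` and no internal
vertex in `A ∪ B`. -/
def IsABPath (A B : Set V) (P : G.Path) : Prop :=
  P.first ∈ A ∧ P.last ∈ B ∧ ∀ v ∈ P.inner, v ∉ A ∪ B

/-- A `T`-path: a path between two distinct terminal vertices without internal
terminal vertices. -/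
def IsTPath (P : G.Path) : Prop :=
  P.first ∈ G.T ∧ P.last ∈ G.T ∧ P.first ≠ P.last ∧ ∀ v ∈ P.inner, v ∉ G.T

/-- A system of pairwise edge-disjoint paths. -/
def EdgeDisjoint (Ps : Set G.Path) : Prop :=
  Ps.Pairwise fun P Q => ∀ e, e ∈ P.edges → e ∉ Q.edges

/-- A system of pairwise edge-disjoint `T`-paths. -/
def IsTPathSystem (Ps : Set G.Path) : Prop :=
  G.EdgeDisjoint Ps ∧ ∀ P ∈ Ps, G.IsTPath P

/-- The set of edges used by a path system. -/
def sysEdges (Ps : Set G.Path) : Set E := ⋃ P ∈ Ps, P.edgeSet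

/-- `C` is *orthogonal* to the path system `Ps`: `C` consists of exactly one edge from
each path of `Ps`. -/
def Orthogonal (C : Set E) (Ps : Set G.Path) : Prop :=
  (∀ P ∈ Ps, ∃! e, e ∈ C ∧ e ∈ P.edges) ∧ ∀ e ∈ C, ∃ P ∈ Ps, e ∈ P.edges

/-- `C` separates `A` and `B`: every `AB`-path meets `C` (i.e. `G − C` has no `AB`-path). -/
def Separates (C : Set E) (A B : Set V) : Prop :=
  ∀ P : G.Path, G.IsABPath A B P → ∃ e ∈ C, e ∈ P.edges

/-- An `AB`-cut. -/
def IsABCut (A B : Set V) (C : Set E) : Prop :=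
  ∀ P : G.Path, G.IsABPath A B P → ∃ e ∈ C, e ∈ P.edges

/-- An Erdős–Menger `AB`-cut: an `AB`-cut orthogonal to some system of pairwise
edge-disjoint `AB`-paths. -/
def IsEMABCut (A B : Set V) (C : Set E) : Prop :=
  G.IsABCut A B C ∧
    ∃ Ps : Set G.Path, G.EdgeDisjoint Ps ∧ (∀ P ∈ Ps, G.IsABPath A B P) ∧ G.Orthogonal C Ps

/-- The order `⊴` on (Erdős–Menger) `AB`-cuts: on every `AB`-path the first edge of `C`
comes no later than the first edge of `C'`. -/
def ABCutLE (A B : Set V) (C C' : Set E) : Prop :=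
  ∀ P : G.Path, G.IsABPath A B P →
    ∀ i : Fin P.edges.length, P.edges.get i ∈ C' →
      ∃ j : Fin P.edges.length, (j : ℕ) ≤ (i : ℕ) ∧ P.edges.get j ∈ C

/-- `C` is the `⊴`-largest Erdős–Menger `AB`-cut. -/
def IsLargestEMABCut (A B : Set V) (C : Set E) : Prop :=
  G.IsEMABCut A B C ∧ ∀ C', G.IsEMABCut A B C' → G.ABCutLE A B C' C

/-- A system `Ps` of pairwise edge-disjoint `T`-paths *links* the terminal `t`:
it covers `δ(t)`. -/
def Links (Ps : Set G.Path) (t : V) : Prop :=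
  G.IsTPathSystem Ps ∧ ∀ e ∈ G.edgeCut {t}, ∃ P ∈ Ps, e ∈ P.edges

/-- The terminal `t` is linked. -/
def Linked (t : V) : Prop := ∃ Ps : Set G.Path, G.Links Ps t

/-- The linkability condition: every terminal is linked. -/
def LinkabilityCondition : Prop := ∀ t ∈ G.T, G.Linked t

/-- A perfect linkage: a system of pairwise edge-disjoint `T`-paths linking every
terminal. -/
def IsPerfectLinkage (Ps : Set G.Path) : Prop :=
  G.IsTPathSystem Ps ∧ ∀ t ∈ G.T, ∀ e ∈ G.edgeCut {t}, ∃ P ∈ Ps, e ∈ P.edges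

/-- In the two-terminal setting: a system of pairwise edge-disjoint `st`-paths
covering `δ(s)` (a linkage of `s`). -/
def IsStLinkage (s t : V) (Ps : Set G.Path) : Prop :=
  G.EdgeDisjoint Ps ∧ (∀ P ∈ Ps, G.IsABPath {s} {t} P) ∧
    ∀ e ∈ G.edgeCut {s}, ∃ P ∈ Ps, e ∈ P.edges

/-- `s` is linked (two-terminal setting). -/
def StLinked (s t : V) : Prop := ∃ Ps : Set G.Path, G.IsStLinkage s t Ps

/-- `λ_G(A,B)`: the maximal number of pairwise edge-disjoint `AB`-paths. -/
noncomputable def lambda (A B : Set V) : ℕ :=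
  sSup {n : ℕ | ∃ Ps : Set G.Path, G.EdgeDisjoint Ps ∧ (∀ P ∈ Ps, G.IsABPath A B P) ∧
    Ps.Finite ∧ Ps.ncard = n}

/-- The grapht obtained by deleting all edges outside `F`. -/
def restrict (F : Set E) : Grapht V F where
  I e := G.I e.1
  loopless e := G.loopless e.1
  T := G.T
  T_nontrivial := G.T_nontrivial

/-- The map sending every vertex of a contracted set `X t` (`t ∈ T`) to `t`. -/
noncomputable def contractMap (X : V → Set V) : V → V := fun v =>
  letI := Classical.dec (∃ u ∈ G.T, v ∈ X u)
  if h : ∃ u ∈ G.T, v ∈ X u then h.choose else v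

/-- The contraction `G/ℱ` of the family `ℱ = {X t : t ∈ T}`: each `X t` is contracted
to `t` and the arising loops are deleted. -/
noncomputable def contract (X : V → Set V) :
    Grapht V {e : E // ¬ ((G.I e).map (G.contractMap X)).IsDiag} where
  I e := (G.I e.1).map (G.contractMap X)
  loopless e := e.2
  T := G.T
  T_nontrivial := G.T_nontrivial

end Grapht

namespace Grapht

variable {V : Type u} {E : Type v}

/-- `l` is the list of arcs (edge, source, target) of a walk from `u` to `v`. -/
def chain (G : Grapht V E) : V → List (E × V × V) → V → Prop
  | u, [], v => u = v
  | u, a :: l, v => G.I a.1 = s(a.2.1, a.2.2) ∧ a.2.1 = u ∧ chain G a.2.2 l v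

/-- The target vertices of a list of arcs. -/
def dsts (l : List (E × V × V)) : List V := l.map (fun a => a.2.2)

variable {G : Grapht V E}

lemma exists_chain {vs : List V} {es : List E} (h : G.IsWalk vs es) :
    ∀ u v, vs.head? = some u → vs.getLast? = some v →
      ∃ l, G.chain u l v ∧ l.map Prod.fst = es ∧ u :: dsts l = vs := by
  induction h with
  | nil x =>
    intro u v hu hv
    simp at hu hv
    exact ⟨[], by simp [chain, ← hu, ← hv], rfl, by simp [dsts, hu]⟩
  | @cons a w vs e es he _ ih =>
    intro u v hu hv
    simp at hu
    subst hu
    obtain ⟨l, h1, h2, h3⟩ := ih w v rfl (by simpa using hv)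
    refine ⟨(e, a, w) :: l, ⟨he, rfl, h1⟩, by simp [h2], ?_⟩
    simp only [dsts, List.map_cons] at h3 ⊢
    rw [h3]

lemma chain_isWalk : ∀ (l : List (E × V × V)) (u v : V), G.chain u l v →
    G.IsWalk (u :: dsts l) (l.map Prod.fst) ∧ (u :: dsts l).getLast? = some v := by
  intro l
  induction l with
  | nil => intro u v h; exact ⟨IsWalk.nil u, by simpa [dsts, chain] using h⟩
  | cons a l ih =>
    intro u v h
    obtain ⟨h1, h2, h3⟩ := h
    obtain ⟨h4, h5⟩ := ih _ _ h3
    subst h2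
    refine ⟨IsWalk.cons h1 h4, ?_⟩
    simpa [dsts] using h5

/-- A simple arc list from `u` to `v`. -/
def SP (G : Grapht V E) (u v : V) (l : List (E × V × V)) : Prop :=
  G.chain u l v ∧ (u :: dsts l).Nodup

lemma exists_path {u v : V} {l : List (E × V × V)} (h : G.SP u v l) :
    ∃ P : G.Path, P.first = u ∧ P.last = v ∧ P.edges = l.map Prod.fst :=
  ⟨⟨u, v, u :: dsts l, l.map Prod.fst, (chain_isWalk l u v h.1).1, h.2, rfl,
    (chain_isWalk l u v h.1).2⟩, rfl, rfl, rfl⟩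

lemma Path.exists_arcs (P : G.Path) :
    ∃ l, G.SP P.first P.last l ∧ l.map Prod.fst = P.edges := by
  obtain ⟨l, h1, h2, h3⟩ := exists_chain P.isWalk _ _ P.head_eq P.getLast_eq
  exact ⟨l, ⟨h1, h3 ▸ P.nodup⟩, h2⟩

/-- The arc list of a path. -/
noncomputable def Path.arcs (P : G.Path) : List (E × V × V) := P.exists_arcs.choose

lemma Path.arcs_sp (P : G.Path) : G.SP P.first P.last P.arcs := P.exists_arcs.choose_spec.1

lemma Path.arcs_edges (P : G.Path) : P.arcs.map Prod.fst = P.edges :=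
  P.exists_arcs.choose_spec.2

lemma Path.mem_edges (P : G.Path) (e : E) : e ∈ P.edges ↔ ∃ a ∈ P.arcs, a.1 = e := by
  rw [← P.arcs_edges]; simp

/-- A path from `s` to `t` is automatically an `st`-path. -/
lemma isABPath_of {s t : V} {P : G.Path} (h1 : P.first = s) (h2 : P.last = t) :
    G.IsABPath {s} {t} P := by
  refine ⟨h1, h2, ?_⟩
  intro x hx
  have hn := P.nodup
  have hh := P.head_eq
  have hl := P.getLast_eq
  unfold Path.inner at hx
  revert hx hn hh hl
  generalize P.verts = vs
  intro hx hn hh hl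
  cases vs with
  | nil => simp at hh
  | cons a vs =>
    simp only [List.head?_cons, Option.some.injEq] at hh
    simp only [List.drop_succ_cons, List.drop_zero] at hx
    have hx1 := List.mem_of_mem_dropLast hx
    rw [List.nodup_cons] at hn
    have hne : vs ≠ [] := by rintro rfl; simp at hx1
    have h3 : vs = vs.dropLast ++ [P.last] := by
      have h4 := List.dropLast_append_getLast hne
      rw [List.getLast?_cons, Option.some_inj, List.getLast?_eq_some_getLast hne] at hl
      simp only [Option.getD_some] at hl
      rw [hl] at h4
      exact h4.symm
    rintro (h | h)
    · rw [Set.mem_singleton_iff] at h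
      rw [h, ← h1, ← hh] at hx1
      exact hn.1 hx1
    · rw [Set.mem_singleton_iff] at h
      have hn2 := hn.2
      rw [h3, List.nodup_append] at hn2
      exact hn2.2.2 _ hx _ (by simp) (h.trans h2.symm)

lemma chain_edge {l : List (E × V × V)} : ∀ {u v : V}, G.chain u l v →
    ∀ a ∈ l, G.I a.1 = s(a.2.1, a.2.2) := by
  induction l with
  | nil => simp
  | cons b l ih =>
    intro u v h a ha
    rcases List.mem_cons.1 ha with rfl | ha
    · exact h.1
    · exact ih h.2.2 a ha

lemma chain_src {l : List (E × V × V)} : ∀ {u v : V}, G.chain u l v →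
    ∀ a ∈ l, a.2.1 ∈ u :: dsts l := by
  induction l with
  | nil => simp
  | cons b l ih =>
    intro u v h a ha
    rcases List.mem_cons.1 ha with rfl | ha
    · simp [h.2.1]
    · have := ih h.2.2 a ha
      simp only [dsts, List.map_cons] at this ⊢
      exact List.mem_cons_of_mem _ this

lemma mem_dsts {l : List (E × V × V)} {a} (ha : a ∈ l) : a.2.2 ∈ dsts l :=
  List.mem_map.2 ⟨a, ha, rfl⟩

lemma chain_last {l : List (E × V × V)} : ∀ {u v : V}, G.chain u l v → v ∈ u :: dsts l := by
  induction l with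
  | nil => intro u v h; simp [chain] at h; simp [h]
  | cons b l ih =>
    intro u v h
    have := ih h.2.2
    simp only [dsts, List.map_cons] at this ⊢
    exact List.mem_cons_of_mem _ this

lemma SP.tail {u v : V} {a} {l : List (E × V × V)} (h : G.SP u v (a :: l)) :
    G.SP a.2.2 v l := ⟨h.1.2.2, by have := h.2; simp only [dsts, List.map_cons] at this ⊢; exact this.of_cons⟩

lemma SP.notMem {u v : V} {a} {l : List (E × V × V)} (h : G.SP u v (a :: l)) :
    u ∉ a.2.2 :: dsts l := by
  have := h.2; simp only [dsts, List.map_cons] at this ⊢; exact (List.nodup_cons.1 this).1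

lemma SP.inj {l : List (E × V × V)} : ∀ {u v : V}, G.SP u v l →
    ∀ a ∈ l, ∀ b ∈ l, a.1 = b.1 → a = b := by
  induction l with
  | nil => simp
  | cons c l ih =>
    intro u v h
    have key : ∀ b ∈ l, c.1 ≠ b.1 := by
      intro b hb hcb
      have h1 := chain_edge h.1 c (by simp)
      have h2 := chain_edge h.1 b (by simp [hb])
      rw [← hcb, h1] at h2
      have hu : c.2.1 = u := h.1.2.1
      have h3 := chain_src h.1.2.2 b hb
      have h4 : b.2.2 ∈ c.2.2 :: dsts l := List.mem_cons_of_mem _ (mem_dsts hb)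
      have h5 := h.notMem
      rcases Sym2.eq_iff.1 h2 with ⟨h6, _⟩ | ⟨h6, _⟩
      · rw [← h6, hu] at h3; exact h5 h3
      · rw [← h6, hu] at h4; exact h5 h4
    intro a ha b hb hab
    rcases List.mem_cons.1 ha with ha' | ha' <;> rcases List.mem_cons.1 hb with hb' | hb'
    · rw [ha', hb']
    · rw [ha'] at hab; exact absurd hab (key b hb')
    · rw [hb'] at hab; exact absurd hab.symm (key a ha')
    · exact ih h.tail a ha' b hb' hab

lemma SP.nodup {u v : V} {l : List (E × V × V)} (h : G.SP u v l) : l.Nodup :=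
  List.Nodup.of_map _ h.2.of_cons

lemma SP.dst_ne {u v : V} {l : List (E × V × V)} (h : G.SP u v l) {a} (ha : a ∈ l) :
    a.2.2 ≠ u := by
  intro h1
  have := (List.nodup_cons.1 h.2).1
  exact this (h1 ▸ mem_dsts ha)

lemma SP.dst_inj {u v : V} {l : List (E × V × V)} (h : G.SP u v l) {a b} (ha : a ∈ l)
    (hb : b ∈ l) (hab : a.2.2 = b.2.2) : a = b :=
  List.inj_on_of_nodup_map h.2.of_cons ha hb hab

lemma SP.src_ne {l : List (E × V × V)} : ∀ {u v : V}, G.SP u v l →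
    ∀ a ∈ l, a.2.1 ≠ v := by
  induction l with
  | nil => simp
  | cons c l ih =>
    intro u v h a ha
    rcases List.mem_cons.1 ha with rfl | ha
    · intro h1
      apply h.notMem
      rw [← h.1.2.1, h1]
      exact chain_last h.1.2.2
    · exact ih h.tail a ha

lemma SP.src_first {u v : V} {l : List (E × V × V)} (h : G.SP u v l) {a b} (ha : a ∈ l)
    (hb : b ∈ l) (h1 : a.2.1 = u) (h2 : b.2.1 = u) : a = b := by
  cases l with
  | nil => simp at ha
  | cons c l =>
    have key : ∀ b ∈ l, b.2.1 ≠ u := by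
      intro b hb hbu
      exact h.notMem (hbu ▸ chain_src h.1.2.2 b hb)
    rcases List.mem_cons.1 ha with ha' | ha' <;> rcases List.mem_cons.1 hb with hb' | hb'
    · rw [ha', hb']
    · exact absurd h2 (key b hb')
    · exact absurd h1 (key a ha')
    · exact absurd h2 (key b hb')

lemma SP.exists_first {u v : V} {l : List (E × V × V)} (h : G.SP u v l) (huv : u ≠ v) :
    ∃ a ∈ l, a.2.1 = u := by
  cases l with
  | nil => exact absurd h.1 huv
  | cons c l => exact ⟨c, by simp, h.1.2.1⟩

lemma chain_append {l m : List (E × V × V)} : ∀ {u v : V}, G.chain u (l ++ m) v ↔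
    ∃ w, G.chain u l w ∧ G.chain w m v := by
  induction l with
  | nil => intro u v; simp [chain]
  | cons c l ih =>
    intro u v
    simp only [List.cons_append, chain, ih]
    constructor
    · rintro ⟨h1, h2, w, h3, h4⟩; exact ⟨w, ⟨h1, h2, h3⟩, h4⟩
    · rintro ⟨w, ⟨h1, h2, h3⟩, h4⟩; exact ⟨h1, h2, w, h3, h4⟩

lemma chain_split (Z : Set V) {l : List (E × V × V)} : ∀ {u v : V}, G.chain u l v → u ∈ Z → v ∉ Z →
    ∃ l1 a l2, l = l1 ++ a :: l2 ∧ a.2.1 ∈ Z ∧ a.2.2 ∉ Z ∧ ∀ b ∈ l1, b.2.1 ∈ Z ∧ b.2.2 ∈ Z := by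
  induction l with
  | nil => intro u v h hu hv; exact absurd (h ▸ hu) hv
  | cons c l ih =>
    intro u v h hu hv
    by_cases hc : c.2.2 ∈ Z
    · obtain ⟨l1, a, l2, h1, h2, h3, h4⟩ := ih h.2.2 hc hv
      refine ⟨c :: l1, a, l2, by simp [h1], h2, h3, ?_⟩
      intro b hb
      rcases List.mem_cons.1 hb with rfl | hb
      · exact ⟨h.2.1 ▸ hu, hc⟩
      · exact h4 b hb
    · exact ⟨[], c, l, rfl, h.2.1 ▸ hu, hc, by simp⟩

lemma chain_stay (Z : Set V) {l : List (E × V × V)} : ∀ {u v : V}, G.chain u l v → u ∉ Z →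
    (∀ a ∈ l, a.2.1 ∉ Z → a.2.2 ∉ Z) → ∀ a ∈ l, a.2.1 ∉ Z ∧ a.2.2 ∉ Z := by
  induction l with
  | nil => simp
  | cons c l ih =>
    intro u v h hu hl a ha
    have hc : c.2.1 ∉ Z := h.2.1 ▸ hu
    have hc2 := hl c (by simp) hc
    rcases List.mem_cons.1 ha with rfl | ha
    · exact ⟨hc, hc2⟩
    · exact ih h.2.2 hc2 (fun a ha => hl a (by simp [ha])) a ha

/-- Reachability through arcs of a set yields a simple arc list. -/
lemma exists_SP_of_reach (D : Set (E × V × V)) (hD : ∀ a ∈ D, G.I a.1 = s(a.2.1, a.2.2))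
    {s v : V} (h : Relation.ReflTransGen (fun u w => ∃ e, (e, u, w) ∈ D) s v) :
    ∃ l, G.SP s v l ∧ ∀ a ∈ l, a ∈ D := by
  have suffixes : ∀ (l : List (E × V × V)) (x u : V), G.SP x v l → u ∈ x :: dsts l →
      ∃ m, G.SP u v m ∧ ∀ a ∈ m, a ∈ l := by
    intro l
    induction l with
    | nil =>
      intro x u h hu
      simp [dsts] at hu
      subst hu
      exact ⟨[], h, by simp⟩
    | cons c l ih =>
      intro x u h hu
      rcases List.mem_cons.1 hu with rfl | hu
      · exact ⟨c :: l, h, by simp⟩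
      · obtain ⟨m, h1, h2⟩ := ih _ u h.tail (by simpa [dsts] using hu)
        exact ⟨m, h1, fun a ha => by simp [h2 a ha]⟩
  induction h using Relation.ReflTransGen.head_induction_on with
  | refl => exact ⟨[], ⟨rfl, by simp [dsts]⟩, by simp⟩
  | @head a c hac _ ih =>
    obtain ⟨e, he⟩ := hac
    obtain ⟨l, hl, hlD⟩ := ih
    by_cases hmem : a ∈ c :: dsts l
    · obtain ⟨m, h1, h2⟩ := suffixes l c a hl hmem
      exact ⟨m, h1, fun b hb => hlD b (h2 b hb)⟩
    · refine ⟨(e, a, c) :: l, ⟨⟨hD _ he, rfl, hl.1⟩, ?_⟩, ?_⟩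
      · have := hl.2
        simp only [dsts, List.map_cons] at this hmem ⊢
        exact List.nodup_cons.2 ⟨hmem, this⟩
      · intro b hb
        rcases List.mem_cons.1 hb with rfl | hb
        · exact he
        · exact hlD b hb

open Classical in
/-- The contribution of an arc to the excess at `v`. -/
noncomputable def exc (v : V) (a : E × V × V) : ℤ :=
  (if a.2.1 = v then 1 else 0) - (if a.2.2 = v then 1 else 0)

open Classical in
lemma chain_exc (x : V) {l : List (E × V × V)} : ∀ {u v : V}, G.chain u l v →
    (l.map (exc x)).sum = (if u = x then 1 else 0) - (if v = x then 1 else 0) := by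
  induction l with
  | nil => intro u v h; simp [chain] at h; simp [h]
  | cons c l ih =>
    intro u v h
    rw [List.map_cons, List.sum_cons, ih h.2.2, exc, h.2.1]
    ring

open Classical in
lemma SP.exc_sum {u v x : V} {l : List (E × V × V)} (h : G.SP u v l) (hu : x ≠ u) (hv : x ≠ v) :
    ∑ a ∈ l.toFinset, exc x a = 0 := by
  rw [List.sum_toFinset _ h.nodup, chain_exc x h.1]
  simp [hu.symm, hv.symm]

open Classical in
/-- In a finite balanced directed graph with an arc leaving `s`, `t` is reachable from `s`. -/
lemma reach_of_balanced (s t : V) (D : Finset (E × V × V))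
    (hbal : ∀ v, v ≠ s → v ≠ t → ∑ a ∈ D, exc v a = 0)
    (hs : ∀ a ∈ D, a.2.2 ≠ s) (a₀) (ha₀ : a₀ ∈ D) (has : a₀.2.1 = s) :
    Relation.ReflTransGen (fun u w => ∃ e, (e, u, w) ∈ (D : Set (E × V × V))) s t := by
  by_contra ht
  set X : Set V := {v | Relation.ReflTransGen
    (fun u w => ∃ e, (e, u, w) ∈ (D : Set (E × V × V))) s v} with hX
  have hsX : s ∈ X := Relation.ReflTransGen.refl
  have hclosed : ∀ a ∈ D, a.2.1 ∈ X → a.2.2 ∈ X := by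
    intro a ha h
    exact Relation.ReflTransGen.tail h ⟨a.1, ha⟩
  let S : Finset V := (D.image (fun a => a.2.1) ∪ D.image (fun a => a.2.2)).filter (· ∈ X)
  have h1 : ∑ v ∈ S, ∑ a ∈ D, exc v a = ∑ a ∈ D, exc s a := by
    rw [Finset.sum_eq_single s]
    · intro v hv hvs
      apply hbal v hvs
      rintro rfl
      exact ht (Finset.mem_filter.1 hv).2
    · intro h
      exfalso
      apply h
      simp only [S, Finset.mem_filter, Finset.mem_union, Finset.mem_image]
      exact ⟨Or.inl ⟨a₀, ha₀, has⟩, hsX⟩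
  have h2 : 0 < ∑ a ∈ D, exc s a := by
    apply Finset.sum_pos'
    · intro a ha
      simp only [exc, hs a ha, if_false]
      split_ifs <;> simp
    · exact ⟨a₀, ha₀, by simp [exc, has, hs a₀ ha₀]⟩
  have h3 : ∑ v ∈ S, ∑ a ∈ D, exc v a ≤ 0 := by
    rw [Finset.sum_comm]
    apply Finset.sum_nonpos
    intro a ha
    simp only [exc, Finset.sum_sub_distrib, Finset.sum_ite_eq]
    have m1 : a.2.1 ∈ S → a.2.2 ∈ S := by
      simp only [S, Finset.mem_filter, Finset.mem_union, Finset.mem_image]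
      rintro ⟨_, h⟩
      exact ⟨Or.inr ⟨a, ha, rfl⟩, hclosed a ha h⟩
    split_ifs <;> simp_all
  omega

open Classical in
/-- Decomposition of a finite balanced directed graph into `st`-paths. -/
lemma decomp (s t : V) (hst : s ≠ t) : ∀ (n : ℕ) (D : Finset (E × V × V)), D.card ≤ n →
    (∀ a ∈ D, G.I a.1 = s(a.2.1, a.2.2)) →
    (∀ a ∈ D, ∀ b ∈ D, a.1 = b.1 → a = b) →
    (∀ v, v ≠ s → v ≠ t → ∑ a ∈ D, exc v a = 0) →
    (∀ a ∈ D, a.2.2 ≠ s) →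
    ∃ Rs : Set G.Path, G.EdgeDisjoint Rs ∧ (∀ R ∈ Rs, G.IsABPath {s} {t} R) ∧
      (∀ R ∈ Rs, ∀ e ∈ R.edges, ∃ a ∈ D, a.1 = e) ∧
      (∀ a ∈ D, a.2.1 = s → ∃ R ∈ Rs, a.1 ∈ R.edges) := by
  intro n
  induction n with
  | zero =>
    intro D hD _ _ _ _
    have : D = ∅ := by simpa using hD
    subst this
    exact ⟨∅, by simp [EdgeDisjoint], by simp, by simp, by simp⟩
  | succ n ih =>
    intro D hcard hI hinj hbal hs
    by_cases hex : ∃ a ∈ D, a.2.1 = s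
    swap
    · push Not at hex
      exact ⟨∅, by simp [EdgeDisjoint], by simp, by simp, fun a ha h => absurd h (hex a ha)⟩
    obtain ⟨a₀, ha₀, has⟩ := hex
    obtain ⟨l, hl, hlD⟩ := exists_SP_of_reach (G := G) (D : Set (E × V × V)) hI
      (reach_of_balanced s t D hbal hs a₀ ha₀ has)
    obtain ⟨f, hf, hfs⟩ := hl.exists_first hst
    have hsub : l.toFinset ⊆ D := by
      intro a ha; exact hlD a (List.mem_toFinset.1 ha)
    have hlt : (D \ l.toFinset).card < D.card :=
      Finset.card_lt_card ⟨Finset.sdiff_subset, fun h => by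
        have := h (hlD f hf)
        simp [hf] at this⟩
    obtain ⟨Rs, h1, h2, h3, h4⟩ := ih (D \ l.toFinset) (by omega)
      (fun a ha => hI a (Finset.sdiff_subset ha))
      (fun a ha b hb => hinj a (Finset.sdiff_subset ha) b (Finset.sdiff_subset hb))
      (fun v hv hv' => by
        have := Finset.sum_sdiff (f := exc v) hsub
        rw [hbal v hv hv', hl.exc_sum hv hv'] at this
        simpa using this)
      (fun a ha => hs a (Finset.sdiff_subset ha))
    obtain ⟨P, hP1, hP2, hP3⟩ := exists_path hl
    have hPmem : ∀ e, e ∈ P.edges ↔ ∃ a ∈ l, a.1 = e := by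
      intro e; rw [hP3, List.mem_map]
    have hdisj : ∀ R ∈ Rs, ∀ e, e ∈ P.edges → e ∉ R.edges := by
      intro R hR e he he'
      obtain ⟨a, ha, hae⟩ := (hPmem e).1 he
      obtain ⟨b, hb, hbe⟩ := h3 R hR e he'
      rw [Finset.mem_sdiff] at hb
      have := hinj a (hlD a ha) b hb.1 (hae.trans hbe.symm)
      subst this
      exact hb.2 (List.mem_toFinset.2 ha)
    refine ⟨insert P Rs, ?_, ?_, ?_, ?_⟩
    · intro A hA B hB hAB e heA heB
      rcases hA with rfl | hA <;> rcases hB with rfl | hB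
      · exact hAB rfl
      · exact hdisj B hB e heA heB
      · exact hdisj A hA e heB heA
      · exact h1 hA hB hAB e heA heB
    · rintro R (rfl | hR)
      · exact isABPath_of hP1 hP2
      · exact h2 R hR
    · rintro R (rfl | hR) e he
      · obtain ⟨a, ha, hae⟩ := (hPmem e).1 he
        exact ⟨a, hlD a ha, hae⟩
      · obtain ⟨a, ha, hae⟩ := h3 R hR e he
        exact ⟨a, Finset.sdiff_subset ha, hae⟩
    · intro a ha hsa
      by_cases hal : a ∈ l
      · exact ⟨P, Or.inl rfl, (hPmem _).2 ⟨a, hal, rfl⟩⟩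
      · obtain ⟨R, hR, hR'⟩ := h4 a (by simp [ha, hal]) hsa
        exact ⟨R, Or.inr hR, hR'⟩

end Grapht
namespace Grapht

variable {V : Type u} {E : Type v} {G : Grapht V E}

lemma sp_of {s t : V} {P : G.Path} (h : G.IsABPath {s} {t} P) : G.SP s t P.arcs := by
  have h1 : P.first = s := h.1
  have h2 : P.last = t := h.2.1
  have := P.arcs_sp
  rwa [h1, h2] at this

lemma edgeCut_arc {x : V} {a : E × V × V} (ha : G.I a.1 = s(a.2.1, a.2.2))
    (h : a.1 ∈ G.edgeCut {x}) : a.2.1 = x ∨ a.2.2 = x := by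
  obtain ⟨u, w, h1, h2, _⟩ := h
  rw [ha] at h1
  rw [Set.mem_singleton_iff] at h2
  rcases Sym2.eq_iff.1 h1 with ⟨h, _⟩ | ⟨_, h⟩
  · exact Or.inl (h.trans h2)
  · exact Or.inr (h.trans h2)

lemma arc_edgeCut_src {a : E × V × V} (ha : G.I a.1 = s(a.2.1, a.2.2)) :
    a.1 ∈ G.edgeCut {a.2.1} := by
  refine ⟨a.2.1, a.2.2, ha, rfl, ?_⟩
  intro h
  apply G.loopless a.1
  rw [ha, Set.mem_singleton_iff.1 h]
  simp

lemma eq_of_shared {Ps : Set G.Path} (h : G.EdgeDisjoint Ps) {P Q : G.Path} (hP : P ∈ Ps)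
    (hQ : Q ∈ Ps) {e : E} (h1 : e ∈ P.edges) (h2 : e ∈ Q.edges) : P = Q := by
  by_contra hne
  exact h hP hQ hne e h1 h2

lemma mem_edges_of_arc {P : G.Path} {a : E × V × V} (h : a ∈ P.arcs) : a.1 ∈ P.edges :=
  (P.mem_edges _).2 ⟨a, h, rfl⟩

lemma cut_case {s t : V} (hst : s ≠ t) {Ps Qs : Set G.Path} (hPs : G.IsStLinkage s t Ps)
    (hQd : G.EdgeDisjoint Qs) (hQ : ∀ q ∈ Qs, G.IsABPath {s} {t} q) (e₀ : E)
    (he₀ : ∀ P ∈ Ps, e₀ ∉ P.edges) (Z : Set V) (hs : s ∈ Z) (ht : t ∉ Z)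
    (hZ1 : ∀ e u w, G.I e = s(u, w) → u ∈ Z → w ∉ Z → e ≠ e₀ → ∃ q ∈ Qs, (e, u, w) ∈ q.arcs)
    (hZ2 : ∀ q ∈ Qs, ∀ a ∈ q.arcs, a.2.1 ∉ Z → a.2.2 ∉ Z) :
    ∃ Rs : Set G.Path, G.IsStLinkage s t Rs ∧
      ∀ R ∈ Rs, ∀ e ∈ R.edges, e ∈ G.edgeCut {t} → ∃ q ∈ Qs, e ∈ q.edges := by
  have key : ∀ P ∈ Ps, ∃ R : G.Path, ∃ q ∈ Qs, ∃ l1 a l2 m1 m2,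
      P.arcs = l1 ++ a :: l2 ∧ q.arcs = m1 ++ a :: m2 ∧
      R.edges = (l1 ++ a :: m2).map Prod.fst ∧ R.first = s ∧ R.last = t ∧
      a.2.1 ∈ Z ∧ a.2.2 ∉ Z ∧ (∀ b ∈ l1, b.2.1 ∈ Z ∧ b.2.2 ∈ Z) ∧
      (∀ b ∈ m2, b.2.1 ∉ Z ∧ b.2.2 ∉ Z) := by
    intro P hP
    have hsp := sp_of (hPs.2.1 P hP)
    obtain ⟨l1, a, l2, h1, h2, h3, h4⟩ := chain_split Z hsp.1 hs ht
    have haP : a ∈ P.arcs := by rw [h1]; simp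
    have haI := chain_edge hsp.1 a haP
    obtain ⟨q, hq, haq⟩ := hZ1 a.1 a.2.1 a.2.2 haI h2 h3
      (fun h => he₀ P hP (h ▸ mem_edges_of_arc haP))
    change a ∈ q.arcs at haq
    obtain ⟨m1, m2, h5⟩ := List.append_of_mem haq
    have hsq := sp_of (hQ q hq)
    rw [h5] at hsq
    rw [h1] at hsp
    obtain ⟨x, hx1, hx2⟩ := chain_append.1 hsp.1
    obtain ⟨y, hy1, hy2⟩ := chain_append.1 hsq.1
    have hm2 : ∀ b ∈ m2, b.2.1 ∉ Z ∧ b.2.2 ∉ Z := by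
      apply chain_stay Z hy2.2.2 h3
      intro b hb
      exact hZ2 q hq b (by rw [h5]; simp [hb])
    have hR : G.SP s t (l1 ++ a :: m2) := by
      refine ⟨chain_append.2 ⟨x, hx1, hx2.1, hx2.2.1, hy2.2.2⟩, ?_⟩
      have n1 := hsp.2
      have n2 := hsq.2
      simp only [dsts, List.map_append] at n1 n2 ⊢
      rw [← List.cons_append, List.nodup_append] at n1 n2 ⊢
      refine ⟨n1.1, n2.2.1, ?_⟩
      have g1 : ∀ x ∈ s :: l1.map (fun a => a.2.2), x ∈ Z := by
        intro x hx
        rcases List.mem_cons.1 hx with rfl | hx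
        · exact hs
        · obtain ⟨b, hb, rfl⟩ := List.mem_map.1 hx
          exact (h4 b hb).2
      have g2 : ∀ x ∈ (a :: m2).map (fun a => a.2.2), x ∉ Z := by
        intro x hx
        obtain ⟨b, hb, rfl⟩ := List.mem_map.1 hx
        rcases List.mem_cons.1 hb with rfl | hb
        · exact h3
        · exact (hm2 b hb).2
      intro x hx y hy hxy
      exact g2 y hy (hxy ▸ g1 x hx)
    obtain ⟨R, r1, r2, r3⟩ := exists_path hR
    exact ⟨R, q, hq, l1, a, l2, m1, m2, h1, h5, r3, r1, r2, h2, h3, h4, hm2⟩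
  have : Nonempty (E × V × V) := ⟨(e₀, s, s)⟩
  choose! R q hq l1 a l2 m1 m2 hPa hqa hRe hR1 hR2 haZ haZ' hl1 hm2 using key
  have haI : ∀ P ∈ Ps, G.I (a P).1 = s((a P).2.1, (a P).2.2) := fun P hP =>
    chain_edge (sp_of (hPs.2.1 P hP)).1 _ (by rw [hPa P hP]; simp)
  have hRmem : ∀ P ∈ Ps, ∀ e ∈ (R P).edges,
      (e ∈ P.edges ∧ ∃ x y, G.I e = s(x, y) ∧ x ∈ Z ∧ y ∈ Z) ∨
      (e ∈ (q P).edges ∧ ∃ x y, G.I e = s(x, y) ∧ y ∉ Z) := by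
    intro P hP e he
    rw [hRe P hP, List.mem_map] at he
    obtain ⟨b, hb, rfl⟩ := he
    rw [List.mem_append] at hb
    rcases hb with hb | hb
    · have hbP : b ∈ P.arcs := by rw [hPa P hP]; simp [hb]
      exact Or.inl ⟨mem_edges_of_arc hbP, _, _, chain_edge (sp_of (hPs.2.1 P hP)).1 b hbP,
        hl1 P hP b hb⟩
    · have hbq : b ∈ (q P).arcs := by rw [hqa P hP]; exact List.mem_append_right _ hb
      refine Or.inr ⟨mem_edges_of_arc hbq, _, _,
        chain_edge (sp_of (hQ _ (hq P hP))).1 b hbq, ?_⟩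
      rcases List.mem_cons.1 hb with rfl | hb
      · exact haZ' P hP
      · exact (hm2 P hP b hb).2
  have hZZ : ∀ e, (∃ x y, G.I e = s(x, y) ∧ x ∈ Z ∧ y ∈ Z) →
      (∃ x y, G.I e = s(x, y) ∧ y ∉ Z) → False := by
    rintro e ⟨x, y, h1, hx, hy⟩ ⟨x', y', h2, hy'⟩
    rw [h1] at h2
    rcases Sym2.eq_iff.1 h2 with ⟨_, h⟩ | ⟨h, _⟩
    · exact hy' (h ▸ hy)
    · exact hy' (h ▸ hx)
  have hqinj : ∀ P ∈ Ps, ∀ P' ∈ Ps, q P = q P' → P = P' := by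
    intro P hP P' hP' h
    have hsq := sp_of (hQ _ (hq P hP))
    have hmem : a P' ∈ (q P).arcs := by rw [h, hqa P' hP']; simp
    have haeq : a P' = a P := by
      have hm := hmem
      rw [hqa P hP, List.mem_append] at hm
      rcases hm with hm | hm
      · exfalso
        -- the target of that arc is outside `Z`, so everything later stays outside
        obtain ⟨k1, k2, hk⟩ := List.append_of_mem hm
        have hc := hsq.1
        rw [hqa P hP, hk, List.append_assoc] at hc
        obtain ⟨w, _, hc2⟩ := chain_append.1 hc
        have hc3 : G.chain (a P').2.2 (k2 ++ a P :: m2 P) t := hc2.2.2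
        have := chain_stay Z hc3 (haZ' P' hP')
          (fun b hb => hZ2 _ (hq P hP) b (by
            rw [hqa P hP, hk, List.append_assoc, List.cons_append]
            exact List.mem_append_right _ (List.mem_cons_of_mem _ hb)))
          (a P) (by simp)
        exact this.1 (haZ P hP)
      · rcases List.mem_cons.1 hm with hm | hm
        · exact hm
        · exact absurd (haZ P' hP') (hm2 P hP _ hm).1
    have e1 : (a P).1 ∈ P.edges := mem_edges_of_arc (by rw [hPa P hP]; simp)
    have e2 : (a P').1 ∈ P'.edges := mem_edges_of_arc (by rw [hPa P' hP']; simp)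
    rw [haeq] at e2
    exact eq_of_shared hPs.1 hP hP' e1 e2
  refine ⟨R '' Ps, ⟨?_, ?_, ?_⟩, ?_⟩
  · rintro _ ⟨P, hP, rfl⟩ _ ⟨P', hP', rfl⟩ hne e he he'
    apply hne
    congr 1
    rcases hRmem P hP e he with ⟨h1, h2⟩ | ⟨h1, h2⟩ <;>
      rcases hRmem P' hP' e he' with ⟨h3, h4⟩ | ⟨h3, h4⟩
    · exact eq_of_shared hPs.1 hP hP' h1 h3
    · exact (hZZ e h2 h4).elim
    · exact (hZZ e h4 h2).elim
    · exact hqinj P hP P' hP' (eq_of_shared hQd (hq P hP) (hq P' hP') h1 h3)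
  · rintro _ ⟨P, hP, rfl⟩
    exact isABPath_of (hR1 P hP) (hR2 P hP)
  · intro e he
    obtain ⟨P, hP, heP⟩ := hPs.2.2 e he
    refine ⟨R P, ⟨P, hP, rfl⟩, ?_⟩
    obtain ⟨b, hb, rfl⟩ := (P.mem_edges e).1 heP
    have hsp := sp_of (hPs.2.1 P hP)
    have hbs : b.2.1 = s := by
      rcases edgeCut_arc (chain_edge hsp.1 b hb) he with h | h
      · exact h
      · exact absurd h (hsp.dst_ne hb)
    -- the first arc of the new path is the first arc of `P`
    have hfirst : ∃ c ∈ l1 P ++ [a P], c.2.1 = s := by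
      have hc := hsp.1
      rw [hPa P hP] at hc
      cases hl : l1 P with
      | nil => rw [hl] at hc; exact ⟨a P, by simp, hc.2.1⟩
      | cons c l => rw [hl] at hc; exact ⟨c, by simp, hc.2.1⟩
    obtain ⟨c, hc, hcs⟩ := hfirst
    have hcP : c ∈ P.arcs := by
      rw [hPa P hP]
      simp only [List.mem_append, List.mem_singleton, List.mem_cons] at hc ⊢
      tauto
    have := hsp.src_first hb hcP hbs hcs
    subst this
    rw [hRe P hP]
    apply List.mem_map_of_mem
    simp only [List.mem_append, List.mem_singleton, List.mem_cons] at hc ⊢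
    tauto
  · rintro _ ⟨P, hP, rfl⟩ e he het
    rcases hRmem P hP e he with ⟨_, x, y, hI, hx, hy⟩ | ⟨h1, _⟩
    · exfalso
      rcases edgeCut_arc (a := (e, x, y)) hI het with h | h
      · exact ht (h ▸ hx)
      · exact ht (h ▸ hy)
    · exact ⟨_, hq P hP, h1⟩

/-- Reversal of an arc. -/
def rev (a : E × V × V) : E × V × V := (a.1, a.2.2, a.2.1)

lemma rev_rev (a : E × V × V) : rev (rev a) = a := rfl

lemma exc_rev (v : V) (a : E × V × V) : exc v (rev a) = - exc v a := by
  by_cases h1 : a.2.1 = v <;> by_cases h2 : a.2.2 = v <;> simp [exc, rev, h1, h2]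

open Classical in
lemma augment {s t : V} (hst : s ≠ t) {Qs : Set G.Path}
    (hQd : G.EdgeDisjoint Qs) (hQ : ∀ q ∈ Qs, G.IsABPath {s} {t} q)
    (W : List (E × V × V)) (hW : G.SP s t W)
    (hWr : ∀ a ∈ W, (∀ q ∈ Qs, a.1 ∉ q.edges) ∨ ∃ q ∈ Qs, rev a ∈ q.arcs)
    (hcov : ∀ e ∈ G.edgeCut {s}, (∃ q ∈ Qs, e ∈ q.edges) ∨ ∃ a ∈ W, a.1 = e) :
    ∃ Rs : Set G.Path, G.IsStLinkage s t Rs ∧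
      ∀ R ∈ Rs, ∀ e ∈ R.edges, (∃ q ∈ Qs, e ∈ q.edges) ∨ ∃ a ∈ W, a.1 = e := by
  let A : Set G.Path := {q ∈ Qs | ∃ a ∈ W, a.1 ∈ q.edges}
  have hAQ : A ⊆ Qs := fun q hq => hq.1
  have hAfin : A.Finite := by
    have : A ⊆ ⋃ a ∈ W.toFinset, {q ∈ Qs | a.1 ∈ q.edges} := by
      rintro q ⟨hq, a, ha, haq⟩
      simp only [Set.mem_iUnion]
      exact ⟨a, by simpa using ha, hq, haq⟩
    refine Set.Finite.subset (Set.Finite.biUnion (Finset.finite_toSet _) ?_) this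
    intro a _
    apply Set.Subsingleton.finite
    intro p hp q hq
    exact eq_of_shared hQd hp.1 hq.1 hp.2 hq.2
  let D : Finset (E × V × V) := hAfin.toFinset.biUnion (fun q => q.arcs.toFinset)
  have memD : ∀ a, a ∈ D ↔ ∃ q ∈ A, a ∈ q.arcs := by
    intro a; simp [D]
  have hDI : ∀ a ∈ D, G.I a.1 = s(a.2.1, a.2.2) := by
    intro a ha
    obtain ⟨q, hq, haq⟩ := (memD a).1 ha
    exact chain_edge (sp_of (hQ q hq.1)).1 a haq
  have hDinj : ∀ a ∈ D, ∀ b ∈ D, a.1 = b.1 → a = b := by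
    intro a ha b hb hab
    obtain ⟨q, hq, haq⟩ := (memD a).1 ha
    obtain ⟨p, hp, hbp⟩ := (memD b).1 hb
    have : q = p := eq_of_shared hQd hq.1 hp.1 (mem_edges_of_arc haq) (hab ▸ mem_edges_of_arc hbp)
    subst this
    exact (sp_of (hQ q hq.1)).inj a haq b hbp hab
  have hDbal : ∀ v, v ≠ s → v ≠ t → ∑ a ∈ D, exc v a = 0 := by
    intro v hv hv'
    rw [Finset.sum_biUnion]
    · apply Finset.sum_eq_zero
      intro q hq
      exact (sp_of (hQ q (hAQ (hAfin.mem_toFinset.1 hq)))).exc_sum hv hv'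
    · intro p hp q hq hpq
      rw [Function.onFun, Finset.disjoint_left]
      intro a ha hb
      apply hpq
      have hp' := hAQ (hAfin.mem_toFinset.1 hp)
      have hq' := hAQ (hAfin.mem_toFinset.1 hq)
      exact eq_of_shared hQd hp' hq' (mem_edges_of_arc (List.mem_toFinset.1 ha))
        (mem_edges_of_arc (List.mem_toFinset.1 hb))
  have hDs : ∀ a ∈ D, a.2.2 ≠ s := by
    intro a ha
    obtain ⟨q, hq, haq⟩ := (memD a).1 ha
    exact (sp_of (hQ q hq.1)).dst_ne haq
  -- every arc of `W` is free or its reversal lies in `D`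
  have hWD : ∀ a ∈ W, rev a ∈ D ∨ (∀ q ∈ Qs, a.1 ∉ q.edges) := by
    intro a ha
    rcases hWr a ha with h | ⟨q, hq, haq⟩
    · exact Or.inr h
    · exact Or.inl ((memD _).2 ⟨q, ⟨hq, a, ha, mem_edges_of_arc (a := rev a) haq⟩, haq⟩)
  let Wb := W.toFinset.filter (fun a => rev a ∈ D)
  let Wf := W.toFinset.filter (fun a => ¬ rev a ∈ D)
  have hWf : ∀ a ∈ Wf, a ∈ W ∧ ∀ q ∈ Qs, a.1 ∉ q.edges := by
    intro a ha
    simp only [Wf, Finset.mem_filter, List.mem_toFinset] at ha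
    exact ⟨ha.1, (hWD a ha.1).resolve_left ha.2⟩
  have hDQ : ∀ a ∈ D, ∃ q ∈ A, a.1 ∈ q.edges := by
    intro a ha
    obtain ⟨q, hq, haq⟩ := (memD a).1 ha
    exact ⟨q, hq, mem_edges_of_arc haq⟩
  have hsubD : Wb.image rev ⊆ D := by
    intro a ha
    obtain ⟨b, hb, rfl⟩ := Finset.mem_image.1 ha
    exact (Finset.mem_filter.1 hb).2
  let D' := (D \ Wb.image rev) ∪ Wf
  have memD' : ∀ a ∈ D', (a ∈ D ∧ a ∉ Wb.image rev) ∨ a ∈ Wf := by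
    intro a ha
    rcases Finset.mem_union.1 ha with h | h
    · exact Or.inl (Finset.mem_sdiff.1 h)
    · exact Or.inr h
  have hdisj : Disjoint (D \ Wb.image rev) Wf := by
    rw [Finset.disjoint_left]
    intro a ha hb
    obtain ⟨q, hq, haq⟩ := hDQ a (Finset.sdiff_subset ha)
    exact (hWf a hb).2 q hq.1 haq
  obtain ⟨Rs, r1, r2, r3, r4⟩ := decomp (G := G) s t hst D'.card D' le_rfl
    (by
      intro a ha
      rcases memD' a ha with h | h
      · exact hDI a h.1
      · exact chain_edge hW.1 a (hWf a h).1)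
    (by
      intro a ha b hb hab
      rcases memD' a ha with h | h <;> rcases memD' b hb with h' | h'
      · exact hDinj a h.1 b h'.1 hab
      · obtain ⟨q, hq, haq⟩ := hDQ a h.1
        exact absurd (hab ▸ haq) ((hWf b h').2 q hq.1)
      · obtain ⟨q, hq, haq⟩ := hDQ b h'.1
        exact absurd (hab ▸ haq) ((hWf a h).2 q hq.1)
      · exact hW.inj a (hWf a h).1 b (hWf b h').1 hab)
    (by
      intro v hv hv'
      rw [Finset.sum_union hdisj]
      have e1 := Finset.sum_sdiff (f := exc v) hsubD
      have e2 : ∑ a ∈ Wb.image rev, exc v a = - ∑ a ∈ Wb, exc v a := by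
        rw [Finset.sum_image]
        · simp only [exc_rev, Finset.sum_neg_distrib]
        · intro a _ b _ h
          rw [← rev_rev a, h, rev_rev]
      have e3 : ∑ a ∈ Wb, exc v a + ∑ a ∈ Wf, exc v a = ∑ a ∈ W.toFinset, exc v a :=
        Finset.sum_filter_add_sum_filter_not _ _ _
      rw [hDbal v hv hv'] at e1
      rw [hW.exc_sum hv hv'] at e3
      linarith)
    (by
      intro a ha
      rcases memD' a ha with h | h
      · exact hDs a h.1
      · exact hW.dst_ne (hWf a h).1)
  have hRe : ∀ R ∈ Rs, ∀ e ∈ R.edges, (∃ q ∈ A, e ∈ q.edges) ∨ ∃ a ∈ Wf, a.1 = e := by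
    intro R hR e he
    obtain ⟨a, ha, rfl⟩ := r3 R hR e he
    rcases memD' a ha with h | h
    · exact Or.inl (hDQ a h.1)
    · exact Or.inr ⟨a, h, rfl⟩
  have hcross : ∀ R ∈ Rs, ∀ q ∈ Qs \ A, ∀ e, e ∈ R.edges → e ∉ q.edges := by
    intro R hR q hq e he heq
    rcases hRe R hR e he with ⟨p, hp, hep⟩ | ⟨a, ha, rfl⟩
    · have := eq_of_shared hQd hp.1 hq.1 hep heq
      subst this
      exact hq.2 hp
    · exact (hWf a ha).2 q hq.1 heq
  refine ⟨(Qs \ A) ∪ Rs, ⟨?_, ?_, ?_⟩, ?_⟩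
  · intro P hP Q hQ' hPQ e heP heQ
    rcases hP with hP | hP <;> rcases hQ' with hQ' | hQ'
    · exact hQd hP.1 hQ'.1 hPQ e heP heQ
    · exact hcross Q hQ' P hP e heQ heP
    · exact hcross P hP Q hQ' e heP heQ
    · exact r1 hP hQ' hPQ e heP heQ
  · rintro P (hP | hP)
    · exact hQ P hP.1
    · exact r2 P hP
  · intro e he
    by_cases hex : ∃ q ∈ Qs, e ∈ q.edges
    · obtain ⟨q, hq, heq⟩ := hex
      by_cases hqA : q ∈ A
      · obtain ⟨a, ha, rfl⟩ := (q.mem_edges e).1 heq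
        have hsq := sp_of (hQ q hq)
        have has : a.2.1 = s := by
          rcases edgeCut_arc (chain_edge hsq.1 a ha) he with h | h
          · exact h
          · exact absurd h (hsq.dst_ne ha)
        obtain ⟨R, hR, hR'⟩ := r4 a (by
          apply Finset.mem_union_left
          rw [Finset.mem_sdiff]
          refine ⟨(memD a).2 ⟨q, hqA, ha⟩, ?_⟩
          intro h
          obtain ⟨b, hb, hba⟩ := Finset.mem_image.1 h
          have hbW : b ∈ W := List.mem_toFinset.1 (Finset.mem_filter.1 hb).1
          apply hW.dst_ne hbW
          rw [← has, ← hba]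
          rfl) has
        exact ⟨R, Or.inr hR, hR'⟩
      · exact ⟨q, Or.inl ⟨hq, hqA⟩, heq⟩
    · rcases hcov e he with h | ⟨a, ha, rfl⟩
      · exact absurd h hex
      · have has : a.2.1 = s := by
          rcases edgeCut_arc (chain_edge hW.1 a ha) he with h | h
          · exact h
          · exact absurd h (hW.dst_ne ha)
        obtain ⟨R, hR, hR'⟩ := r4 a (by
          apply Finset.mem_union_right
          simp only [Wf, Finset.mem_filter, List.mem_toFinset]
          refine ⟨ha, fun h => hex ?_⟩
          obtain ⟨q, hq, haq⟩ := hDQ _ h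
          exact ⟨q, hq.1, haq⟩) has
        exact ⟨R, Or.inr hR, hR'⟩
  · rintro R (hR | hR) e he
    · exact Or.inl ⟨R, hR.1, he⟩
    · rcases hRe R hR e he with ⟨p, hp, hep⟩ | ⟨a, ha, rfl⟩
      · exact Or.inl ⟨p, hp.1, hep⟩
      · exact Or.inr ⟨a, (hWf a ha).1, rfl⟩

end Grapht

/-- If some linkage of `s` misses exactly one edge of `δ(t)` and no linkage of `s` uses
a strictly smaller part of `δ(t)`, then every linkage of `s` misses at most one edge
of `δ(t)`. -/
theorem missing_exactly_one {V : Type u} {E : Type v} (G : Grapht V E) (s t : V)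
    (hst : s ≠ t) (hT : G.T = {s, t})
    (Ps : Set G.Path) (hPs : G.IsStLinkage s t Ps)
    (hone : ∃ e₀ : E, {e ∈ G.edgeCut {t} | ∀ P ∈ Ps, e ∉ P.edges} = {e₀})
    (hmin : ¬ ∃ Ps' : Set G.Path, G.IsStLinkage s t Ps' ∧
      {e ∈ G.edgeCut {t} | ∃ P ∈ Ps', e ∈ P.edges} ⊂
        {e ∈ G.edgeCut {t} | ∃ P ∈ Ps, e ∈ P.edges})
    (Qs : Set G.Path) (hQs : G.IsStLinkage s t Qs) :
    {e ∈ G.edgeCut {t} | ∀ P ∈ Qs, e ∉ P.edges}.Subsingleton := by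
  obtain ⟨e₀, he₀⟩ := hone
  have he₀' : e₀ ∈ G.edgeCut {t} ∧ ∀ P ∈ Ps, e₀ ∉ P.edges := by
    have : e₀ ∈ ({e₀} : Set E) := rfl
    rw [← he₀] at this
    exact this
  -- no linkage misses `e₀` together with another edge
  have finish : ∀ Rs : Set G.Path, G.IsStLinkage s t Rs → ∀ f ∈ G.edgeCut {t}, f ≠ e₀ →
      (∀ R ∈ Rs, e₀ ∉ R.edges) → (∀ R ∈ Rs, f ∉ R.edges) → False := by
    intro Rs hRs f hf hfe h1 h2
    have used : ∀ e ∈ G.edgeCut {t}, e ≠ e₀ → ∃ P ∈ Ps, e ∈ P.edges := by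
      intro e he hne
      by_contra hcon
      push Not at hcon
      apply hne
      have : e ∈ {e ∈ G.edgeCut {t} | ∀ P ∈ Ps, e ∉ P.edges} := ⟨he, hcon⟩
      rw [he₀] at this
      exact this
    apply hmin
    refine ⟨Rs, hRs, ?_, ?_⟩
    · rintro e ⟨he, R, hR, heR⟩
      exact ⟨he, used e he (fun h => h1 R hR (h ▸ heR))⟩
    · intro hsub
      obtain ⟨_, R, hR, hfR⟩ := hsub ⟨hf, used f hf hfe⟩
      exact h2 R hR hfR
  rintro f₁ ⟨hf₁, hf₁'⟩ f₂ ⟨hf₂, hf₂'⟩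
  by_contra hne
  by_cases hQ0 : ∃ q ∈ Qs, e₀ ∈ q.edges
  swap
  · push Not at hQ0
    by_cases h : f₁ = e₀
    · exact finish Qs hQs f₂ hf₂ (fun h' => hne (h.trans h'.symm)) hQ0 hf₂'
    · exact finish Qs hQs f₁ hf₁ h hQ0 hf₁'
  obtain ⟨q₀, hq₀, heq₀⟩ := hQ0
  have hfe₁ : f₁ ≠ e₀ := fun h => hf₁' q₀ hq₀ (h ▸ heq₀)
  have hfe₂ : f₂ ≠ e₀ := fun h => hf₂' q₀ hq₀ (h ▸ heq₀)
  let Q' : Set G.Path := Qs \ {q₀}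
  have hQ'Q : ∀ q ∈ Q', q ∈ Qs := fun q hq => hq.1
  have hQ'd : G.EdgeDisjoint Q' := hQs.1.mono Set.sdiff_subset
  have hQ'p : ∀ q ∈ Q', G.IsABPath {s} {t} q := fun q hq => hQs.2.1 q hq.1
  have hQ'e : ∀ q ∈ Q', e₀ ∉ q.edges := by
    intro q hq h
    exact hq.2 (Grapht.eq_of_shared hQs.1 hq.1 hq₀ h heq₀)
  -- residual arcs
  let D : Set (E × V × V) := {a | G.I a.1 = s(a.2.1, a.2.2) ∧ a.1 ≠ e₀ ∧
    ((∀ q ∈ Q', a.1 ∉ q.edges) ∨ ∃ q ∈ Q', Grapht.rev a ∈ q.arcs)}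
  by_cases hreach : Relation.ReflTransGen (fun u w => ∃ e, (e, u, w) ∈ D) s t
  · obtain ⟨W, hW, hWD⟩ := Grapht.exists_SP_of_reach (G := G) D (fun a ha => ha.1) hreach
    obtain ⟨Rs, hRs, hRe⟩ := Grapht.augment hst hQ'd hQ'p W hW (fun a ha => (hWD a ha).2.2) (by
      intro e he
      obtain ⟨q, hq, heq⟩ := hQs.2.2 e he
      by_cases hqq : q = q₀
      · right
        subst hqq
        obtain ⟨a, ha, has⟩ := hW.exists_first hst
        refine ⟨a, ha, ?_⟩
        have haD := hWD a ha
        have hfree : ∀ q ∈ Q', a.1 ∉ q.edges := by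
          rcases haD.2.2 with h | ⟨p, hp, hap⟩
          · exact h
          · exact absurd has ((Grapht.sp_of (hQ'p p hp)).dst_ne hap)
        have hacut : a.1 ∈ G.edgeCut {s} := has ▸ Grapht.arc_edgeCut_src haD.1
        obtain ⟨p, hp, hap⟩ := hQs.2.2 a.1 hacut
        have hpq : p = q := by
          by_contra h
          exact hfree p ⟨hp, h⟩ hap
        subst hpq
        have hsq := Grapht.sp_of (hQs.2.1 p hp)
        have hsrc : ∀ b ∈ p.arcs, b.1 ∈ G.edgeCut {s} → b.2.1 = s := by
          intro b hb hbs
          rcases Grapht.edgeCut_arc (Grapht.chain_edge hsq.1 b hb) hbs with h | h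
          · exact h
          · exact absurd h (hsq.dst_ne hb)
        obtain ⟨b, hb, hbe⟩ := (p.mem_edges e).1 heq
        obtain ⟨c, hc, hca⟩ := (p.mem_edges a.1).1 hap
        have := hsq.src_first hb hc (hsrc b hb (hbe ▸ he)) (hsrc c hc (hca ▸ hacut))
        rw [← hca, ← this, hbe]
      · exact Or.inl ⟨q, ⟨hq, hqq⟩, heq⟩)
    have hR0 : ∀ R ∈ Rs, e₀ ∉ R.edges := by
      intro R hR h
      rcases hRe R hR e₀ h with ⟨q, hq, hh⟩ | ⟨a, ha, hh⟩
      · exact hQ'e q hq hh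
      · exact (hWD a ha).2.1 hh
    have hRf : ∀ f ∈ G.edgeCut {t}, (∀ q ∈ Qs, f ∉ q.edges) → (∃ R ∈ Rs, f ∈ R.edges) →
        ∃ a ∈ W, a.1 = f ∧ a.2.2 = t := by
      rintro f hf hfQ ⟨R, hR, hfR⟩
      rcases hRe R hR f hfR with ⟨q, hq, hh⟩ | ⟨a, ha, rfl⟩
      · exact absurd hh (hfQ q hq.1)
      · refine ⟨a, ha, rfl, ?_⟩
        rcases Grapht.edgeCut_arc (hWD a ha).1 hf with h | h
        · exact absurd h (hW.src_ne a ha)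
        · exact h
    by_cases h1 : ∃ R ∈ Rs, f₁ ∈ R.edges
    · by_cases h2 : ∃ R ∈ Rs, f₂ ∈ R.edges
      · obtain ⟨a, ha, ha1, ha2⟩ := hRf f₁ hf₁ hf₁' h1
        obtain ⟨b, hb, hb1, hb2⟩ := hRf f₂ hf₂ hf₂' h2
        have := hW.dst_inj ha hb (ha2.trans hb2.symm)
        exact hne (by rw [← ha1, ← hb1, this])
      · push Not at h2
        exact finish Rs hRs f₂ hf₂ hfe₂ hR0 h2
    · push Not at h1
      exact finish Rs hRs f₁ hf₁ hfe₁ hR0 h1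
  · obtain ⟨Rs, hRs, hRe⟩ := Grapht.cut_case hst hPs hQ'd hQ'p e₀ he₀'.2
      {v | Relation.ReflTransGen (fun u w => ∃ e, (e, u, w) ∈ D) s v}
      Relation.ReflTransGen.refl hreach
      (by
        intro e u w hI hu hw hee
        by_contra hcon
        push Not at hcon
        apply hw
        refine Relation.ReflTransGen.tail hu ⟨e, hI, hee, ?_⟩
        by_cases hfree : ∀ q ∈ Q', e ∉ q.edges
        · exact Or.inl hfree
        · right
          push Not at hfree
          obtain ⟨q, hq, heq⟩ := hfree
          obtain ⟨a, ha, hae⟩ := (q.mem_edges e).1 heq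
          refine ⟨q, hq, ?_⟩
          have haI := Grapht.chain_edge (Grapht.sp_of (hQ'p q hq)).1 a ha
          obtain ⟨a1, a2, a3⟩ := a
          simp only at hae haI
          subst hae
          rw [hI] at haI
          rcases Sym2.eq_iff.1 haI with ⟨rfl, rfl⟩ | ⟨rfl, rfl⟩
          · exact absurd ha (hcon q hq)
          · exact ha)
      (by
        intro q hq a ha h1 h2
        apply h1
        have haI := Grapht.chain_edge (Grapht.sp_of (hQ'p q hq)).1 a ha
        refine Relation.ReflTransGen.tail h2 ⟨a.1, ?_, ?_, Or.inr ⟨q, hq, ha⟩⟩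
        · rw [haI]; exact Sym2.eq_swap
        · intro h
          exact hQ'e q hq (h ▸ Grapht.mem_edges_of_arc (a := a) ha))
    refine finish Rs hRs f₁ hf₁ hfe₁ ?_ ?_
    · intro R hR h
      obtain ⟨q, hq, hh⟩ := hRe R hR e₀ h he₀'.1
      exact hQ'e q hq hh
    · intro R hR h
      obtain ⟨q, hq, hh⟩ := hRe R hR f₁ h hf₁
      exact hf₁' q hq.1 hh
end

section
/- Let G=(V,E,I,T) be a grapht, let t∈T and X_t⊆V with t∈X_t, and suppose δ_G(X_t) is an Erdős-Menger t(T−t)-cut. Then X_t is boundary-linked: there is a system {P_{t,e} : e∈δ_G(X_t)} of pairwise edge-disjoint paths where e is the first edge and t the last vertex of P_{t,e}. If in addition t is linked in G, then this system can be chosen to also cover δ_G(t). -/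
/-! Common definitions: graphts (multigraphs with terminals), walks, paths, cycles,
edge cuts, inner Eulerian graphts, path systems, linkages, Erdős–Menger cuts,
restriction (edge deletion) and contraction. -/

universe u v

namespace Grapht

open Classical in
/-- Abstract linkage lemma (Pym / stable matching). -/
theorem pym_aux {E : Type v} (A B : Set E) (P Q : E → List E)
    (hPd : ∀ a ∈ A, ∀ a' ∈ A, ∀ z, z ∈ P a → z ∈ P a' → a = a')
    (hQd : ∀ b ∈ B, ∀ b' ∈ B, ∀ z, z ∈ Q b → z ∈ Q b' → b = b')
    (hPh : ∀ a ∈ A, ∃ b ∈ B, b ∈ P a)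
    (hPl : ∀ a ∈ A, a ∈ P a ∧ ∀ y ∈ P a, (P a).idxOf y ≤ (P a).idxOf a)
    (hQh : ∀ b ∈ B, b ∈ Q b ∧ ∀ y ∈ Q b, (Q b).idxOf b ≤ (Q b).idxOf y)
    (hQl : ∀ b ∈ B, ∃ a ∈ A, a ∈ Q b) :
    ∃ (F : E → Set E) (β : E → E),
      (∀ a ∈ A, ∀ a' ∈ A, ∀ z, z ∈ F a → z ∈ F a' → a = a') ∧
      (∀ a ∈ A, a ∈ F a) ∧ (∀ b ∈ B, ∃ a ∈ A, b ∈ F a ∧ β a = b) ∧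
      (∀ a ∈ A, ∃ b ∈ B, ∃ x, x ∈ P a ∧ x ∈ Q b ∧
        F a = {z | (z ∈ P a ∧ (P a).idxOf x ≤ (P a).idxOf z) ∨
          (z ∈ Q b ∧ (Q b).idxOf z ≤ (Q b).idxOf x)}) := by
  let Pr : Set E → Set E := fun S =>
    {z | ∃ a ∈ A, z ∈ P a ∧ ∀ y ∈ P a, y ∈ S → (P a).idxOf y ≤ (P a).idxOf z}
  let Φ : Set E → Set E := fun S =>
    {z | ∃ b ∈ B, z ∈ Q b ∧ ∀ y ∈ Q b, y ∈ Pr S → (Q b).idxOf z ≤ (Q b).idxOf y}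
  have hPr : ∀ S S', S ⊆ S' → Pr S' ⊆ Pr S := by
    rintro S S' h z ⟨a, ha, hz, hy⟩
    exact ⟨a, ha, hz, fun y hyP hyS => hy y hyP (h hyS)⟩
  have hΦ : Monotone Φ := by
    rintro S S' h z ⟨b, hb, hz, hy⟩
    exact ⟨b, hb, hz, fun y hyQ hyS => hy y hyQ (hPr _ _ h hyS)⟩
  let Φ' : Set E →o Set E := ⟨Φ, hΦ⟩
  obtain ⟨S, hS⟩ : ∃ S, Φ S = S := ⟨OrderHom.lfp Φ', Φ'.map_lfp⟩
  -- every `a` gets a match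
  have hA : ∀ a ∈ A, ∃ x, x ∈ P a ∧ x ∈ S ∧ ∀ y ∈ P a, y ∈ S → (P a).idxOf y ≤ (P a).idxOf x := by
    intro a ha
    obtain ⟨b, hb, hbP⟩ := hPh a ha
    have hbS : b ∈ S := by
      rw [← hS]
      exact ⟨b, hb, (hQh b hb).1, fun y hy _ => (hQh b hb).2 y hy⟩
    obtain ⟨x, hx, hm⟩ := Finset.exists_max_image ((P a).toFinset.filter (· ∈ S))
      (fun y => (P a).idxOf y) ⟨b, by simp [hbP, hbS]⟩
    simp only [Finset.mem_filter, List.mem_toFinset] at hx hm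
    exact ⟨x, hx.1, hx.2, fun y h1 h2 => hm y ⟨h1, h2⟩⟩
  have hB : ∀ b ∈ B, ∃ y, y ∈ Q b ∧ y ∈ Pr S ∧ y ∈ S := by
    intro b hb
    obtain ⟨a, ha, haQ⟩ := hQl b hb
    have haS : a ∈ Pr S := ⟨a, ha, (hPl a ha).1, fun y hy _ => (hPl a ha).2 y hy⟩
    obtain ⟨x, hx, hm⟩ := Finset.exists_min_image ((Q b).toFinset.filter (· ∈ Pr S))
      (fun y => (Q b).idxOf y) ⟨a, by simp [haQ, haS]⟩
    simp only [Finset.mem_filter, List.mem_toFinset] at hx hm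
    refine ⟨x, hx.1, hx.2, ?_⟩
    rw [← hS]
    exact ⟨b, hb, hx.1, fun y h1 h2 => hm y ⟨h1, h2⟩⟩
  have hSQ : ∀ x ∈ S, ∃ b ∈ B, x ∈ Q b ∧ ∀ y ∈ Q b, y ∈ Pr S → (Q b).idxOf x ≤ (Q b).idxOf y := by
    intro x hx
    rw [← hS] at hx
    exact hx
  have key : ∀ a : E, ∃ x b, a ∈ A → x ∈ P a ∧ x ∈ S ∧
      (∀ y ∈ P a, y ∈ S → (P a).idxOf y ≤ (P a).idxOf x) ∧ b ∈ B ∧ x ∈ Q b ∧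
      ∀ y ∈ Q b, y ∈ Pr S → (Q b).idxOf x ≤ (Q b).idxOf y := by
    intro a
    by_cases ha : a ∈ A
    · obtain ⟨x, h1, h2, h3⟩ := hA a ha
      obtain ⟨b, h4, h5, h6⟩ := hSQ x h2
      exact ⟨x, b, fun _ => ⟨h1, h2, h3, h4, h5, h6⟩⟩
    · exact ⟨a, a, fun h => absurd h ha⟩
  choose x β hk using key
  -- the part of `P a` from `a` to `x a` consists of proposed elements
  have hprop : ∀ a ∈ A, ∀ z ∈ P a, (P a).idxOf (x a) ≤ (P a).idxOf z → z ∈ Pr S := by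
    intro a ha z hz hle
    exact ⟨a, ha, hz, fun y hy hyS => ((hk a ha).2.2.1 y hy hyS).trans hle⟩
  have hxPr : ∀ a ∈ A, x a ∈ Pr S := fun a ha => hprop a ha _ (hk a ha).1 le_rfl
  have hmix : ∀ a ∈ A, ∀ a' ∈ A, ∀ z, z ∈ P a → (P a).idxOf (x a) ≤ (P a).idxOf z →
      z ∈ Q (β a') → (Q (β a')).idxOf z ≤ (Q (β a')).idxOf (x a') → a = a' := by
    intro a ha a' ha' z hz hle hzQ hzle
    have h1 := (hk a' ha').2.2.2.2.2 z hzQ (hprop a ha z hz hle)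
    have : z = x a' := (List.idxOf_inj hzQ).1 (le_antisymm hzle h1)
    subst this
    exact hPd a ha a' ha' _ hz (hk a' ha').1
  refine ⟨fun a => {z | (z ∈ P a ∧ (P a).idxOf (x a) ≤ (P a).idxOf z) ∨
          (z ∈ Q (β a) ∧ (Q (β a)).idxOf z ≤ (Q (β a)).idxOf (x a))}, β, ?_, ?_, ?_, ?_⟩
  · rintro a ha a' ha' z (⟨h1, h2⟩ | ⟨h1, h2⟩) (⟨h3, h4⟩ | ⟨h3, h4⟩)
    · exact hPd a ha a' ha' z h1 h3
    · exact hmix a ha a' ha' z h1 h2 h3 h4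
    · exact (hmix a' ha' a ha z h3 h4 h1 h2).symm
    · obtain ⟨p1, p2, p3, p4, p5, p6⟩ := hk a ha
      obtain ⟨q1, q2, q3, q4, q5, q6⟩ := hk a' ha'
      have hb := hQd _ p4 _ q4 z h1 h3
      have e1 := p6 (x a') (hb ▸ q5) (hxPr a' ha')
      have e2 := q6 (x a) (hb ▸ p5) (hxPr a ha)
      rw [← hb] at e2
      have : x a = x a' := (List.idxOf_inj p5).1 (le_antisymm e1 e2)
      exact hPd a ha a' ha' (x a) p1 (this ▸ q1)
  · intro a ha
    exact Or.inl ⟨(hPl a ha).1, (hPl a ha).2 _ (hk a ha).1⟩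
  · intro b hb
    obtain ⟨y, hyQ, ⟨a, ha, hyP, hym⟩, hyS⟩ := hB b hb
    obtain ⟨p1, p2, p3, p4, p5, p6⟩ := hk a ha
    have : y = x a := (List.idxOf_inj hyP).1 (le_antisymm (p3 y hyP hyS) (hym _ p1 p2))
    subst this
    have hbb := hQd _ hb _ p4 _ hyQ p5
    refine ⟨a, ha, Or.inr ?_, hbb.symm⟩
    rw [← hbb]
    exact ⟨(hQh b hb).1, (hQh b hb).2 _ hyQ⟩
  · intro a ha
    obtain ⟨p1, p2, p3, p4, p5, p6⟩ := hk a ha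
    exact ⟨β a, p4, x a, p1, p5, rfl⟩

variable {V : Type u} {E : Type v} {G : Grapht V E}

/-- Reachability using only edges in `F`. -/
def Reach (G : Grapht V E) (F : Set E) : V → V → Prop :=
  Relation.ReflTransGen (fun u v => ∃ e ∈ F, G.I e = s(u, v))

theorem Reach.symm {F : Set E} {u v : V} (h : G.Reach F u v) : G.Reach F v u := by
  unfold Reach at *
  induction h with
  | refl => exact .refl
  | tail _ h ih =>
    obtain ⟨e, he, hI⟩ := h
    exact .head ⟨e, he, by rw [hI, Sym2.eq_swap]⟩ ih

theorem Reach.mono {F F' : Set E} (hF : F ⊆ F') {u v : V} (h : G.Reach F u v) :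
    G.Reach F' u v :=
  Relation.ReflTransGen.mono (fun _ _ ⟨e, he, hI⟩ => ⟨e, hF he, hI⟩) u v h

theorem IsWalk.suffix {vs : List V} {es : List E} (h : G.IsWalk vs es) :
    ∀ u ∈ vs, ∃ vs' es', G.IsWalk (u :: vs') es' ∧ (u :: vs') <:+ vs ∧ es' ⊆ es := by
  induction h with
  | nil v =>
    intro u hu
    simp only [List.mem_singleton] at hu
    subst hu
    exact ⟨[], [], .nil _, List.suffix_refl _, by simp⟩
  | @cons u w vs e es hI h ih =>
    intro x hx
    rcases List.mem_cons.1 hx with rfl | hx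
    · exact ⟨_, _, .cons hI h, List.suffix_refl _, by simp⟩
    · obtain ⟨vs', es', h1, h2, h3⟩ := ih x hx
      exact ⟨vs', es', h1, h2.trans (List.suffix_cons _ _), fun y hy => List.mem_cons_of_mem _ (h3 hy)⟩

theorem Reach.exists_path {F : Set E} {u v : V} (h : G.Reach F u v) :
    ∃ p : G.Path, p.first = u ∧ p.last = v ∧ ∀ e ∈ p.edges, e ∈ F := by
  suffices H : ∃ vs es, G.IsWalk (u :: vs) es ∧ (u :: vs).Nodup ∧
      (u :: vs).getLast? = some v ∧ ∀ e ∈ es, e ∈ F by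
    obtain ⟨vs, es, h1, h2, h3, h4⟩ := H
    exact ⟨⟨u, v, u :: vs, es, h1, h2, rfl, h3⟩, rfl, rfl, h4⟩
  unfold Reach at h
  induction h using Relation.ReflTransGen.head_induction_on with
  | refl => exact ⟨[], [], .nil _, by simp, by simp, by simp⟩
  | @head a c hac _ ih =>
    obtain ⟨e, he, hI⟩ := hac
    obtain ⟨vs, es, h1, h2, h3, h4⟩ := ih
    by_cases ha : a ∈ c :: vs
    · obtain ⟨vs', es', k1, k2, k3⟩ := h1.suffix a ha
      refine ⟨vs', es', k1, h2.sublist k2.sublist, ?_, fun e he => h4 e (k3 he)⟩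
      obtain ⟨l, hl⟩ := k2
      rw [← hl] at h3
      simpa using h3
    · refine ⟨c :: vs, e :: es, .cons hI h1, List.nodup_cons.2 ⟨ha, h2⟩, ?_, ?_⟩
      · simpa using h3
      · intro f hf
        rcases List.mem_cons.1 hf with rfl | hf
        · exact he
        · exact h4 f hf

theorem IsWalk.mem_verts {vs : List V} {es : List E} (h : G.IsWalk vs es) :
    ∀ e ∈ es, ∀ v ∈ G.I e, v ∈ vs := by
  induction h with
  | nil v => simp
  | @cons u w vs e es hI h ih =>
    intro f hf v hv
    rcases List.mem_cons.1 hf with rfl | hf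
    · rw [hI, Sym2.mem_iff] at hv
      rcases hv with rfl | rfl <;> simp
    · exact List.mem_cons_of_mem _ (ih f hf v hv)

theorem IsWalk.edges_nodup {vs : List V} {es : List E} (h : G.IsWalk vs es) (hn : vs.Nodup) :
    es.Nodup := by
  induction h with
  | nil v => simp
  | @cons u w vs e es hI h ih =>
    rw [List.nodup_cons] at hn ⊢
    refine ⟨fun he => hn.1 (h.mem_verts e he u ?_), ih hn.2⟩
    rw [hI]; simp

theorem IsWalk.snoc {vs : List V} {es : List E} (h : G.IsWalk vs es) {u w : V} {e : E}
    (hl : vs.getLast? = some u) (hI : G.I e = s(u, w)) : G.IsWalk (vs ++ [w]) (es ++ [e]) := by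
  induction h with
  | nil v =>
    simp only [List.getLast?_singleton, Option.some.injEq] at hl
    subst hl
    exact .cons hI (.nil _)
  | @cons a b vs f es hf h ih =>
    exact .cons hf (ih (by simpa using hl))

theorem IsWalk.reverse {vs : List V} {es : List E} (h : G.IsWalk vs es) :
    G.IsWalk vs.reverse es.reverse := by
  induction h with
  | nil v => exact .nil _
  | @cons a b vs f es hf h ih =>
    rw [List.reverse_cons, List.reverse_cons (a := f)]
    exact ih.snoc (u := b) (by simp) (by rw [hf, Sym2.eq_swap])

/-- A walk leaving the complement of `Y` to `Y` uses an edge of the cut. -/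
theorem IsWalk.crosses {vs : List V} {es : List E} (h : G.IsWalk vs es) (Y : Set V) :
    ∀ u v, vs.head? = some u → vs.getLast? = some v → u ∉ Y → v ∈ Y →
      ∃ e ∈ es, e ∈ G.edgeCut Y := by
  induction h with
  | nil x =>
    intro u v h1 h2 h3 h4
    simp at h1 h2
    subst h1; subst h2
    exact absurd h4 h3
  | @cons a b vs f es hf h ih =>
    intro u v h1 h2 h3 h4
    simp only [List.head?_cons, Option.some.injEq] at h1
    subst h1
    by_cases hb : b ∈ Y
    · exact ⟨f, by simp, b, a, by rw [hf, Sym2.eq_swap], hb, h3⟩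
    · obtain ⟨e, he, hY⟩ := ih b v rfl (by simpa using h2) hb h4
      exact ⟨e, List.mem_cons_of_mem _ he, hY⟩

theorem mem_edgeCut_cases {X : Set V} {e : E} {u w : V} (hI : G.I e = s(u, w)) :
    e ∈ G.edgeCut X ↔ (u ∈ X ∧ w ∉ X) ∨ (w ∈ X ∧ u ∉ X) := by
  constructor
  · rintro ⟨a, b, h, ha, hb⟩
    rw [hI, Sym2.eq_iff] at h
    rcases h with ⟨rfl, rfl⟩ | ⟨rfl, rfl⟩
    · exact .inl ⟨ha, hb⟩
    · exact .inr ⟨ha, hb⟩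
  · rintro (⟨h1, h2⟩ | ⟨h1, h2⟩)
    · exact ⟨u, w, hI, h1, h2⟩
    · exact ⟨w, u, by rw [hI, Sym2.eq_swap], h1, h2⟩

/-- First segment of a walk from `t` inside `X` until it leaves `X`. -/
def Seg (G : Grapht V E) (X : Set V) (t : V) (L : List E) : Prop :=
  ∃ vs, G.IsWalk (t :: vs) L ∧ (∃ w, w ∉ X ∧ (t :: vs).getLast? = some w) ∧
    (∃ a ∈ G.edgeCut X, L.getLast? = some a) ∧
    ∀ z ∈ L, z ∈ G.edgeCut X ∨ ∀ v ∈ G.I z, v ∈ X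

theorem IsWalk.exists_seg {vs : List V} {es : List E} (h : G.IsWalk vs es) (X : Set V) :
    ∀ t, vs.head? = some t → t ∈ X → (∃ v ∈ vs, v ∉ X) → ∃ L, L <+: es ∧ G.Seg X t L := by
  induction h with
  | nil x =>
    rintro t h1 h2 ⟨v, hv, hvX⟩
    simp at h1 hv
    subst h1; subst hv
    exact absurd h2 hvX
  | @cons a b vs f es hf h ih =>
    rintro t h1 h2 ⟨v, hv, hvX⟩
    simp only [List.head?_cons, Option.some.injEq] at h1
    subst h1
    by_cases hb : b ∈ X
    · have hv' : v ∈ b :: vs := by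
        rcases List.mem_cons.1 hv with rfl | hv
        · exact absurd h2 hvX
        · exact hv
      obtain ⟨L, hL, ws, k1, ⟨w, k2, k3⟩, ⟨c, k4, k5⟩, k6⟩ := ih b rfl hb ⟨v, hv', hvX⟩
      refine ⟨f :: L, by simpa using hL, b :: ws, .cons hf k1, ⟨w, k2, by simpa using k3⟩,
        ⟨c, k4, ?_⟩, ?_⟩
      · rw [List.getLast?_cons, k5]; rfl
      · intro z hz
        rcases List.mem_cons.1 hz with rfl | hz
        · right
          intro v hv
          rw [hf, Sym2.mem_iff] at hv
          rcases hv with rfl | rfl <;> assumption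
        · exact k6 z hz
    · have hc : f ∈ G.edgeCut X := ⟨a, b, hf, h2, hb⟩
      refine ⟨[f], by simp, [b], .cons hf (.nil _), ⟨b, hb, by simp⟩, ⟨f, hc, by simp⟩, ?_⟩
      intro z hz
      simp only [List.mem_singleton] at hz
      subst hz
      exact .inl hc

theorem Seg.head {X : Set V} {t : V} {L : List E} (h : G.Seg X t L) :
    ∃ b ∈ G.edgeCut {t}, L.head? = some b := by
  obtain ⟨vs, h1, -, ⟨a, _, h3⟩, -⟩ := h
  cases h1 with
  | nil => simp at h3
  | @cons u w vs e es hI h =>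
    refine ⟨e, ⟨t, w, hI, rfl, ?_⟩, rfl⟩
    rintro hw
    have hw : w = t := hw
    exact G.loopless e (by rw [hI, hw]; simp)

theorem IsWalk.reach_prefix {vs : List V} {es : List E} (h : G.IsWalk vs es) :
    ∀ L1 z L2, es = L1 ++ z :: L2 → ∀ t, vs.head? = some t → ∀ v ∈ G.I z,
      G.Reach {y | y ∈ L1 ∨ y = z} t v := by
  induction h with
  | nil x => intro L1 z L2 h; simp at h
  | @cons a b vs f es hf h ih =>
    intro L1 z L2 hL t ht v hv
    simp only [List.head?_cons, Option.some.injEq] at ht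
    subst ht
    cases L1 with
    | nil =>
      simp only [List.nil_append, List.cons.injEq] at hL
      obtain ⟨rfl, rfl⟩ := hL
      rw [hf, Sym2.mem_iff] at hv
      rcases hv with rfl | rfl
      · exact .refl
      · exact .single ⟨f, by simp, hf⟩
    | cons c L1 =>
      simp only [List.cons_append, List.cons.injEq] at hL
      obtain ⟨rfl, rfl⟩ := hL
      refine Relation.ReflTransGen.head (b := b) ⟨f, by simp, hf⟩ ?_
      refine Reach.mono ?_ (ih L1 z L2 rfl b rfl v hv)
      intro y hy
      rcases hy with hy | hy
      · exact .inl (List.mem_cons_of_mem _ hy)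
      · exact .inr hy

theorem IsWalk.reach_suffix {vs : List V} {es : List E} (h : G.IsWalk vs es)
    (L1 : List E) (z : E) (L2 : List E) (hL : es = L1 ++ z :: L2) (w : V)
    (hw : vs.getLast? = some w) (v : V) (hv : v ∈ G.I z) :
    G.Reach {y | y ∈ L2 ∨ y = z} w v := by
  have := h.reverse.reach_prefix L2.reverse z L1.reverse (by simp [hL]) w (by simpa using hw) v hv
  simpa using this

open Classical in
theorem Seg.reach_le {X : Set V} {t : V} {L : List E} (h : G.Seg X t L)
    {x : E} (hx : x ∈ L) {v : V} (hv : v ∈ G.I x) :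
    G.Reach {z | z ∈ L ∧ L.idxOf z ≤ L.idxOf x} t v := by
  obtain ⟨vs, h1, -⟩ := h
  obtain ⟨L1, L2, rfl, hx1⟩ := List.eq_append_cons_of_mem hx
  refine Reach.mono ?_ (h1.reach_prefix L1 x L2 rfl t rfl v hv)
  rintro y (hy | rfl)
  · refine ⟨by simp [hy], ?_⟩
    rw [List.idxOf_append_of_mem hy, List.idxOf_append_of_notMem hx1]
    have := List.idxOf_lt_length_of_mem hy
    omega
  · exact ⟨by simp, le_rfl⟩

open Classical in
theorem Seg.reach_ge {X : Set V} {t : V} {L : List E} (h : G.Seg X t L) (hn : L.Nodup) :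
    ∃ w, w ∉ X ∧ ∀ x ∈ L, ∀ v ∈ G.I x,
      G.Reach {z | z ∈ L ∧ L.idxOf x ≤ L.idxOf z} w v := by
  obtain ⟨vs, h1, ⟨w, hw, hl⟩, -⟩ := h
  refine ⟨w, hw, ?_⟩
  intro x hx v hv
  obtain ⟨L1, L2, rfl⟩ := List.append_of_mem hx
  refine Reach.mono ?_ (h1.reach_suffix L1 x L2 rfl w hl v hv)
  rw [List.nodup_append] at hn
  rintro y (hy | rfl)
  · refine ⟨by simp [hy], ?_⟩
    rw [List.idxOf_append_of_notMem (fun h => hn.2.2 x h x (by simp) rfl),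
      List.idxOf_append_of_notMem (fun h => hn.2.2 y h y (by simp [hy]) rfl)]
    simp
  · exact ⟨by simp, le_rfl⟩

theorem finish {X : Set V} {t : V} (htX : t ∈ X) (F : E → Set E)
    (hd : ∀ a ∈ G.edgeCut X, ∀ a' ∈ G.edgeCut X, ∀ z, z ∈ F a → z ∈ F a' → a = a')
    (hm : ∀ a ∈ G.edgeCut X, a ∈ F a)
    (hF : ∀ a ∈ G.edgeCut X, ∀ z ∈ F a, z ∈ G.edgeCut X ∨ ∀ v ∈ G.I z, v ∈ X)
    (hr : ∀ a ∈ G.edgeCut X, ∃ w, w ∉ X ∧ G.Reach (F a) w t) :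
    ∃ Pt : E → G.Path,
      (∀ e ∈ G.edgeCut X, ∀ e' ∈ G.edgeCut X, e ≠ e' →
        ∀ f, f ∈ (Pt e).edges → f ∉ (Pt e').edges) ∧
      (∀ e ∈ G.edgeCut X, (Pt e).edges.head? = some e ∧ (Pt e).last = t) ∧
      ((∀ b ∈ G.edgeCut {t}, ∃ a ∈ G.edgeCut X, b ∈ F a) →
        (∀ a ∈ G.edgeCut X, ∀ b ∈ G.edgeCut {t}, ∀ b' ∈ G.edgeCut {t},
          b ∈ F a → b' ∈ F a → b = b') →
        ∀ e ∈ G.edgeCut {t}, ∃ f ∈ G.edgeCut X, e ∈ (Pt f).edges) := by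
  have key : ∀ a, ∃ p : G.Path, a ∈ G.edgeCut X →
      p.first ∉ X ∧ p.last = t ∧ ∀ e ∈ p.edges, e ∈ F a := by
    intro a
    by_cases ha : a ∈ G.edgeCut X
    · obtain ⟨w, hw, hR⟩ := hr a ha
      obtain ⟨p, rfl, h2, h3⟩ := hR.exists_path
      exact ⟨p, fun _ => ⟨hw, h2, h3⟩⟩
    · exact ⟨⟨t, t, [t], [], .nil _, by simp, rfl, rfl⟩, fun h => absurd h ha⟩
  choose Pt hPt using key
  refine ⟨Pt, ?_, ?_, ?_⟩
  · intro e he e' he' hne f hf hf'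
    exact hne (hd e he e' he' f ((hPt e he).2.2 f hf) ((hPt e' he').2.2 f hf'))
  · intro e he
    obtain ⟨h1, h2, h3⟩ := hPt e he
    refine ⟨?_, h2⟩
    generalize Pt e = p at *
    obtain ⟨u, v, vs, es, hw, hn, hh, hl⟩ := p
    simp only at *
    cases hw with
    | nil x =>
      simp at hh hl
      subst hh; subst hl; subst h2
      exact absurd htX h1
    | @cons a b vs f es hI h =>
      simp only [List.head?_cons, Option.some.injEq] at hh ⊢
      subst hh
      have hf := h3 f (by simp)
      rcases hF e he f hf with hc | hc
      · exact hd f hc e he f (hm f hc) hf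
      · exact absurd (hc a (by rw [hI]; simp)) h1
  · intro hcov huniq b hb
    obtain ⟨a, ha, hba⟩ := hcov b hb
    refine ⟨a, ha, ?_⟩
    obtain ⟨h1, h2, h3⟩ := hPt a ha
    obtain ⟨b', hb', hbc⟩ := (Pt a).isWalk.crosses {t} _ _ (Pt a).head_eq (Pt a).getLast_eq
      (fun h => h1 (by rw [show (Pt a).first = t from h]; exact htX)) h2
    rwa [huniq a ha b hb b' hbc hba (h3 b' hb')]

theorem mem_inner {q : G.Path} {t : V} (h : t ∈ q.verts) (h1 : t ≠ q.first) (h2 : t ≠ q.last) :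
    t ∈ q.inner := by
  obtain ⟨u, v, vs, es, hw, hn, hh, hl⟩ := q
  simp only [Path.inner] at *
  cases vs with
  | nil => simp at h
  | cons a l =>
    simp only [List.head?_cons, Option.some.injEq] at hh
    subst hh
    rcases List.mem_cons.1 h with h | h
    · exact absurd h h1
    · rcases List.eq_nil_or_concat l with rfl | ⟨l', c, rfl⟩
      · simp at h
      · rw [List.concat_eq_append] at *
        have hl : c = v := by
          rw [← List.cons_append, List.getLast?_append] at hl
          simpa using hl
        subst hl
        simpa [h2] using h

theorem head_of_mem {vs : List V} {es : List E} (h : G.IsWalk vs es) (hn : vs.Nodup) {t : V}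
    (ht : vs.head? = some t) {f : E} (hf : f ∈ es) (htf : t ∈ G.I f) : es.head? = some f := by
  cases h with
  | nil => simp at hf
  | @cons u w vs e es hI h =>
    simp only [List.head?_cons, Option.some.injEq] at ht ⊢
    subst ht
    rcases List.mem_cons.1 hf with rfl | hf
    · rfl
    · exact absurd (h.mem_verts f hf _ htf) (List.nodup_cons.1 hn).1

open Classical in
theorem idxOf_le_last {L : List E} (hn : L.Nodup) {a y : E} (ha : L.getLast? = some a)
    (hy : y ∈ L) : L.idxOf y ≤ L.idxOf a := by
  obtain ⟨l, rfl⟩ := List.getLast?_eq_some_iff.1 ha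
  rw [List.nodup_append] at hn
  have hal : a ∉ l := fun h => hn.2.2 a h a (by simp) rfl
  have := List.idxOf_lt_length_of_mem hy
  rw [List.idxOf_append_of_notMem hal]
  simp at this ⊢
  omega

end Grapht

/-- If `δ(X t)` is an Erdős–Menger `t(T−t)`-cut with `t ∈ X t`, then `X t` is
boundary-linked; if moreover `t` is linked, the witnessing system can be chosen to
also cover `δ(t)`. -/
theorem boundary_linked_of_EMCut {V : Type u} {E : Type v} (G : Grapht V E)
    (t : V) (ht : t ∈ G.T) (Xt : Set V) (htX : t ∈ Xt)
    (hEM : G.IsEMABCut {t} (G.T \ {t}) (G.edgeCut Xt)) :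
    (∃ Pt : E → G.Path,
      (∀ e ∈ G.edgeCut Xt, ∀ e' ∈ G.edgeCut Xt, e ≠ e' →
        ∀ f, f ∈ (Pt e).edges → f ∉ (Pt e').edges) ∧
      ∀ e ∈ G.edgeCut Xt, (Pt e).edges.head? = some e ∧ (Pt e).last = t) ∧
    (G.Linked t → ∃ Pt : E → G.Path,
      (∀ e ∈ G.edgeCut Xt, ∀ e' ∈ G.edgeCut Xt, e ≠ e' →
        ∀ f, f ∈ (Pt e).edges → f ∉ (Pt e').edges) ∧
      (∀ e ∈ G.edgeCut Xt, (Pt e).edges.head? = some e ∧ (Pt e).last = t) ∧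
      ∀ e ∈ G.edgeCut {t}, ∃ f ∈ G.edgeCut Xt, e ∈ (Pt f).edges) := by
  classical
  set A := G.edgeCut Xt with hA
  obtain ⟨hcut, Ps, hPsd, hPsAB, hPs1, hPs2⟩ := hEM
  -- segments of the Erdős–Menger system
  have keyP : ∀ a, ∃ (p : G.Path) (L : List E), a ∈ A → p ∈ Ps ∧ L ⊆ p.edges ∧ L.Nodup ∧
      G.Seg Xt t L ∧ (∀ f ∈ A, f ∈ p.edges → f = a) ∧ L.getLast? = some a := by
    intro a
    by_cases ha : a ∈ A
    · obtain ⟨p, hp, hap⟩ := hPs2 a ha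
      obtain ⟨c, -, hc⟩ := hPs1 p hp
      have huniq : ∀ f ∈ A, f ∈ p.edges → f = a := fun f h1 h2 =>
        (hc f ⟨h1, h2⟩).trans (hc a ⟨ha, hap⟩).symm
      have hfirst : p.first = t := (hPsAB p hp).1
      obtain ⟨u, w, hI, hu, hw⟩ := ha
      obtain ⟨L, hL, hS⟩ := p.isWalk.exists_seg Xt t (by rw [p.head_eq, hfirst]) htX
        ⟨w, p.isWalk.mem_verts a hap w (by rw [hI]; simp), hw⟩
      refine ⟨p, L, fun _ => ⟨hp, hL.subset, (p.isWalk.edges_nodup p.nodup).sublist hL.sublist,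
        hS, huniq, ?_⟩⟩
      obtain ⟨_, -, -, ⟨d, hd, hdl⟩, -⟩ := hS
      rw [hdl, huniq d hd (hL.subset (List.mem_of_getLast? hdl))]
    · exact ⟨⟨t, t, [t], [], .nil _, by simp, rfl, rfl⟩, [], fun h => absurd h ha⟩
  choose p P hP using keyP
  have hPd : ∀ a ∈ A, ∀ a' ∈ A, ∀ z, z ∈ P a → z ∈ P a' → a = a' := by
    intro a ha a' ha' z hz hz'
    obtain ⟨p1, p2, p3, p4, p5, p6⟩ := hP a ha
    obtain ⟨q1, q2, q3, q4, q5, q6⟩ := hP a' ha'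
    by_cases hpp : p a = p a'
    · exact q5 a ha (by rw [← hpp]; exact p2 (List.mem_of_getLast? p6))
    · exact absurd (q2 hz') (hPsd p1 q1 hpp z (p2 hz))
  have hPa : ∀ a ∈ A, a ∈ P a := fun a ha => List.mem_of_getLast? (hP a ha).2.2.2.2.2
  have hPin : ∀ a ∈ A, ∀ z ∈ P a, z ∈ A ∨ ∀ v ∈ G.I z, v ∈ Xt := by
    intro a ha
    obtain ⟨_, _, _, _, h⟩ := (hP a ha).2.2.2.1
    exact h
  constructor
  · obtain ⟨Pt, h1, h2, -⟩ := Grapht.finish htX (fun a => {z | z ∈ P a}) hPd hPa hPin (by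
      intro a ha
      obtain ⟨-, -, hn, hS, -, -⟩ := hP a ha
      obtain ⟨w, hw, hR⟩ := hS.reach_ge hn
      refine ⟨w, hw, ?_⟩
      obtain ⟨u, hau⟩ : ∃ u, u ∈ G.I a := by
        induction G.I a with
        | _ u w => exact ⟨u, by simp⟩
      exact ((hR a (hPa a ha) u hau).mono (fun z hz => hz.1)).trans
        ((hS.reach_le (hPa a ha) hau).mono (fun z hz => hz.1)).symm)
    exact ⟨Pt, h1, h2⟩
  · rintro ⟨Qs, ⟨hQsd, hQsT⟩, hQcov⟩
    have keyQ : ∀ b, ∃ (q : G.Path) (L : List E), b ∈ G.edgeCut {t} → q ∈ Qs ∧ L ⊆ q.edges ∧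
        L.Nodup ∧ G.Seg Xt t L ∧ (∀ f ∈ G.edgeCut {t}, f ∈ q.edges → f = b) ∧
        L.head? = some b := by
      intro b
      by_cases hb : b ∈ G.edgeCut {t}
      · obtain ⟨q, hq, hbq⟩ := hQcov b hb
        obtain ⟨hT1, hT2, hne, hin⟩ := hQsT q hq
        -- a path from `t` with the same edges
        obtain ⟨r, hre, hrt, hrl, hrin⟩ : ∃ r : G.Path, (∀ f, f ∈ r.edges ↔ f ∈ q.edges) ∧
            r.first = t ∧ r.last ∈ G.T \ {t} ∧ ∀ v ∈ r.inner, v ∉ G.T := by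
          have htq : t ∈ q.verts := by
            obtain ⟨u, w, hI, hu, hw⟩ := hb
            have hu : u = t := hu
            subst hu
            exact q.isWalk.mem_verts b hbq u (by rw [hI]; simp)
          have hor : t = q.first ∨ t = q.last := by
            by_contra hcon
            push Not at hcon
            refine hin t ?_ ht
            exact Grapht.mem_inner htq hcon.1 hcon.2
          rcases hor with h | h
          · exact ⟨q, fun f => Iff.rfl, h.symm, ⟨hT2, fun hh => hne (h.symm.trans hh.symm)⟩, hin⟩
          · refine ⟨⟨q.last, q.first, q.verts.reverse, q.edges.reverse, q.isWalk.reverse,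
              by simpa using q.nodup, by simpa using q.getLast_eq, by simpa using q.head_eq⟩,
              by simp, h.symm, ⟨hT1, fun hh => hne (hh.trans h)⟩, ?_⟩
            intro v hv
            apply hin v
            unfold Grapht.Path.inner at hv ⊢
            simp only [List.drop_one, List.tail_reverse, List.dropLast_reverse,
              List.mem_reverse] at hv
            rw [List.drop_one, ← List.tail_dropLast]
            exact hv
        have huniq' : ∀ f ∈ G.edgeCut {t}, f ∈ r.edges → r.edges.head? = some f := by
          intro f hf hfr
          obtain ⟨u, w, hI, hu, hw⟩ := hf
          have hu : u = t := hu
          subst hu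
          exact Grapht.head_of_mem r.isWalk r.nodup (by rw [r.head_eq, hrt]) hfr (by rw [hI]; simp)
        have huniq : ∀ f ∈ G.edgeCut {t}, f ∈ q.edges → f = b := by
          intro f hf hfq
          have h1 := huniq' f hf ((hre f).2 hfq)
          rw [huniq' b hb ((hre b).2 hbq)] at h1
          exact (Option.some.inj h1).symm
        obtain ⟨e, ⟨u, w, hI, hu, hw⟩, her⟩ := hcut r ⟨hrt, hrl, fun v hv hvT => hrin v hv (by
          rcases hvT with h | h
          · rw [show v = t from h]; exact ht
          · exact h.1)⟩
        obtain ⟨L, hL, hS⟩ := r.isWalk.exists_seg Xt t (by rw [r.head_eq, hrt]) htX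
          ⟨w, r.isWalk.mem_verts e her w (by rw [hI]; simp), hw⟩
        refine ⟨q, L, fun _ => ⟨hq, fun f hf => (hre f).1 (hL.subset hf),
          (r.isWalk.edges_nodup r.nodup).sublist hL.sublist, hS, huniq, ?_⟩⟩
        obtain ⟨d, hd, hdl⟩ := hS.head
        rw [hdl, huniq d hd ((hre d).1 (hL.subset (List.mem_of_head? hdl)))]
      · exact ⟨⟨t, t, [t], [], .nil _, by simp, rfl, rfl⟩, [], fun h => absurd h hb⟩
    choose q Q hQ using keyQ
    have hQb : ∀ b ∈ G.edgeCut {t}, b ∈ Q b := fun b hb =>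
      List.mem_of_head? (hQ b hb).2.2.2.2.2
    obtain ⟨F, β, hFd, hFa, hFb, hF⟩ := Grapht.pym_aux A (G.edgeCut {t}) P Q hPd
      (by
        intro a ha a' ha' z hz hz'
        obtain ⟨p1, p2, p3, p4, p5, p6⟩ := hQ a ha
        obtain ⟨q1, q2, q3, q4, q5, q6⟩ := hQ a' ha'
        by_cases hpp : q a = q a'
        · exact q5 a ha (by rw [← hpp]; exact p2 (hQb a ha))
        · exact absurd (q2 hz') (hQsd p1 q1 hpp z (p2 hz)))
      (by
        intro a ha
        obtain ⟨b, hb, hbl⟩ := (hP a ha).2.2.2.1.head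
        exact ⟨b, hb, List.mem_of_head? hbl⟩)
      (by
        intro a ha
        refine ⟨hPa a ha, fun y hy => ?_⟩
        exact Grapht.idxOf_le_last (hP a ha).2.2.1 (hP a ha).2.2.2.2.2 hy)
      (by
        intro b hb
        refine ⟨hQb b hb, fun y hy => ?_⟩
        have h := (hQ b hb).2.2.2.2.2
        cases hc : Q b with
        | nil => simp [hc] at h
        | cons c l =>
          rw [hc] at h
          simp only [List.head?_cons, Option.some.injEq] at h
          subst h
          simp)
      (by
        intro b hb
        obtain ⟨_, -, -, ⟨d, hd, hdl⟩, -⟩ := (hQ b hb).2.2.2.1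
        exact ⟨d, hd, List.mem_of_getLast? hdl⟩)
    obtain ⟨Pt, h1, h2, h3⟩ := Grapht.finish htX F hFd hFa
      (by
        intro a ha z hz
        obtain ⟨b, hb, x, hxP, hxQ, hFeq⟩ := hF a ha
        rw [hFeq] at hz
        rcases hz with hz | hz
        · exact hPin a ha z hz.1
        · obtain ⟨_, _, _, _, h⟩ := (hQ b hb).2.2.2.1
          exact h z hz.1)
      (by
        intro a ha
        obtain ⟨b, hb, x, hxP, hxQ, hFeq⟩ := hF a ha
        obtain ⟨-, -, hn, hS, -, -⟩ := hP a ha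
        obtain ⟨w, hw, hR⟩ := hS.reach_ge hn
        refine ⟨w, hw, ?_⟩
        obtain ⟨v, hv⟩ : ∃ v, v ∈ G.I x := by
          induction G.I x with
          | _ u w => exact ⟨u, by simp⟩
        rw [hFeq]
        exact ((hR x hxP v hv).mono (fun z hz => Or.inl hz)).trans
          (((hQ b hb).2.2.2.1.reach_le hxQ hv).mono (fun z hz => Or.inr hz)).symm)
    refine ⟨Pt, h1, h2, h3 (fun b hb => ?_) ?_⟩
    · obtain ⟨a, ha, h, -⟩ := hFb b hb
      exact ⟨a, ha, h⟩
    intro a ha b hb b' hb' hba hba'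
    obtain ⟨c, hc, hbc, hcb⟩ := hFb b hb
    obtain ⟨c', hc', hbc', hcb'⟩ := hFb b' hb'
    rw [← hcb, ← hcb', hFd c hc a ha b hbc hba, hFd c' hc' a ha b' hbc' hba']
end
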